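/- arXiv:0707.4083 — 16 statements merged into one kernel-verified Lean document; each statement's English description precedes it below -/
import Mathlib

section
/- Let l ≥ 1, F = GF(2^{2l}), t = 2^l, and L* = {α ∈ F : α ≠ 0 and α^{t−1} ≠ 1}. If S ⊆ L* is a codeword of the binary Goppa code Γ(L*, X^{t−1}+1), then ∑_{α ∈ S} (α·(α^{t−1}+1))⁻¹ = 0 in F. (This is the paper's Lemma 1: the extra parity-check row [1/(α(α^{t−1}+1))]_{α∈L*} is a linear combination of the rows of the parity-check matrix H₁*.) -/
open Finset

theorem aux_field {F : Type*} [Field F] [CharP F 2] (l : ℕ) (hl : 1 ≤ l) (t : ℕ) (ht : t = 2 ^ l)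
    (hq : ∀ α : F, (α ^ t) ^ t = α) (S : Finset F)
    (hS : ∀ α ∈ S, α ≠ 0 ∧ α ^ (t - 1) ≠ 1)
    (hcw : ∀ j < t - 1, ∑ α ∈ S, α ^ j * (α ^ (t - 1) + 1)⁻¹ = 0) :
    ∑ α ∈ S, (α * (α ^ (t - 1) + 1))⁻¹ = 0 := by
  obtain ⟨m, rfl⟩ : ∃ m, l = m + 1 := ⟨l - 1, by omega⟩
  set n := 2 ^ m with hn
  have hn0 : 0 < n := by positivity
  have htn : t = n * 2 := by rw [ht, pow_succ]
  have hT : ∀ α : F, α * (α ^ (t - 1) + 1) = α ^ t + α := by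
    intro α
    rw [mul_add, mul_one, ← pow_succ', Nat.sub_add_cancel (by omega)]
  have hadd : ∀ a b : F, (a + b) ^ t = a ^ t + b ^ t := by
    intro a b
    rw [ht]
    exact add_pow_char_pow a b 2 _
  have hTt : ∀ α : F, (α ^ t + α) ^ t = α ^ t + α := by
    intro α
    rw [hadd, hq, add_comm]
  have hT0 : ∀ α ∈ S, α ^ t + α ≠ 0 := by
    intro α hα
    rw [← hT]
    refine mul_ne_zero (hS α hα).1 fun h => (hS α hα).2 ?_
    exact CharTwo.add_eq_zero.mp h
  have hB : ∑ α ∈ S, α ^ n * (α ^ t + α)⁻¹ = 0 := by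
    rw [← hcw (n - 1) (by omega)]
    refine Finset.sum_congr rfl fun α hα => ?_
    have h0 := (hS α hα).1
    rw [← hT, mul_inv, ← mul_assoc]
    congr 1
    obtain ⟨k, hk⟩ : ∃ k, n = k + 1 := ⟨n - 1, by omega⟩
    rw [hk, Nat.add_sub_cancel, pow_succ, mul_assoc, mul_inv_cancel₀ h0, mul_one]
  have hBt : ∑ α ∈ S, (α ^ t) ^ n * (α ^ t + α)⁻¹ = 0 := by
    have h : (∑ α ∈ S, α ^ n * (α ^ t + α)⁻¹) ^ t = 0 ^ t := by rw [hB]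
    rw [zero_pow (by omega), ht, sum_pow_char_pow, ← ht] at h
    rw [← h]
    refine Finset.sum_congr rfl fun α _ => ?_
    rw [mul_pow, inv_pow, hTt, ← pow_mul, ← pow_mul, mul_comm]
    ring
  have hC : ∑ α ∈ S, (α ^ t + α) ^ n * (α ^ t + α)⁻¹ = 0 := by
    have h : ∑ α ∈ S, ((α ^ t) ^ n * (α ^ t + α)⁻¹ + α ^ n * (α ^ t + α)⁻¹) = 0 := by
      rw [Finset.sum_add_distrib, hBt, hB, add_zero]
    rw [← h]
    refine Finset.sum_congr rfl fun α _ => ?_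
    rw [← add_mul, hn, ← add_pow_char_pow (p := 2)]
  have hD : (∑ α ∈ S, (α ^ t + α) ^ n * (α ^ t + α)⁻¹) ^ 2 = 0 ^ 2 := by rw [hC]
  rw [zero_pow two_ne_zero, sum_pow_char 2] at hD
  rw [← hD]
  refine Finset.sum_congr rfl fun α hα => ?_
  have h0 := hT0 α hα
  rw [hT, mul_pow, ← pow_mul, ← htn, hTt]
  field_simp

/-- Paper's Lemma 1: for the binary Goppa code `Γ(L*, X^(t-1)+1)` over `F = GF(2^(2l))`
with `L* = {α ∈ F : α ≠ 0 ∧ α^(t-1) ≠ 1}`, every codeword `S` also satisfies the extra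
parity check `∑_{α ∈ S} (α (α^(t-1)+1))⁻¹ = 0`. -/
theorem stmt_0 (l : ℕ) (hl : 1 ≤ l) (t : ℕ) (ht : t = 2 ^ l)
    (S : Finset (GaloisField 2 (2 * l)))
    (hS : ∀ α ∈ S, α ≠ 0 ∧ α ^ (t - 1) ≠ 1)
    (hcw : ∀ j < t - 1, ∑ α ∈ S, α ^ j * (α ^ (t - 1) + 1)⁻¹ = 0) :
    ∑ α ∈ S, (α * (α ^ (t - 1) + 1))⁻¹ = 0 := by
  refine aux_field l hl t ht ?_ S hS hcw
  intro α
  let _ : Fintype (GaloisField 2 (2 * l)) := Fintype.ofFinite _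
  have hc : Fintype.card (GaloisField 2 (2 * l)) = t * t := by
    rw [← Nat.card_eq_fintype_card, GaloisField.card 2 _ (by omega), ht, ← pow_add]
    congr 1
    omega
  rw [← pow_mul, ← hc, FiniteField.pow_card]
end

section
/- Let l ≥ 1, F = GF(2^{2l}), t = 2^l, and L* = {α ∈ F : α ≠ 0 and α^{t−1} ≠ 1} (so that both X^{t−1}+1 and X^t+X are nonvanishing on L*). Then the binary Goppa codes Γ(L*, X^{t−1}+1) and Γ(L*, X^t+X) are equal: a finite subset S ⊆ L* is a codeword of Γ(L*, X^{t−1}+1) if and only if S is a codeword of Γ(L*, X^t+X). (Paper's Lemma 2, with A = 1.) -/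
open Finset

/-- Paper's Lemma 2 (with `A = 1`): over `F = GF(2^(2l))` with `t = 2^l` and
`L* = {α : α ≠ 0 ∧ α^(t-1) ≠ 1}`, the binary Goppa codes `Γ(L*, X^(t-1)+1)` and
`Γ(L*, X^t+X)` have exactly the same codewords. -/
theorem stmt_1 (l : ℕ) (hl : 1 ≤ l) (t : ℕ) (ht : t = 2 ^ l)
    (S : Finset (GaloisField 2 (2 * l)))
    (hS : ∀ α ∈ S, α ≠ 0 ∧ α ^ (t - 1) ≠ 1) :
    (∀ j < t - 1, ∑ α ∈ S, α ^ j * (α ^ (t - 1) + 1)⁻¹ = 0) ↔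
      (∀ j < t, ∑ α ∈ S, α ^ j * (α ^ t + α)⁻¹ = 0) := by
  classical
  obtain ⟨k, rfl⟩ : ∃ k, l = k + 1 := ⟨l - 1, by omega⟩
  have hm : 0 < 2 ^ k := by positivity
  have ht2 : t = 2 ^ k * 2 := by rw [ht, pow_succ]
  have hcard : ∀ a : GaloisField 2 (2 * (k + 1)), (a ^ t) ^ t = a := by
    intro a
    let _ := Fintype.ofFinite (GaloisField 2 (2 * (k + 1)))
    have h1 := FiniteField.pow_card a
    rw [← Nat.card_eq_fintype_card, GaloisField.card 2 _ (by omega)] at h1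
    rw [← pow_mul, ht, ← pow_add]
    convert h1 using 2
    ring
  have key : ∀ j, ∀ α ∈ S, α ^ (j + 1) * (α ^ t + α)⁻¹ = α ^ j * (α ^ (t - 1) + 1)⁻¹ := by
    intro j α hα
    have h0 := (hS α hα).1
    have e : α ^ t + α = α * (α ^ (t - 1) + 1) := by
      have : t = (t - 1) + 1 := by omega
      conv_lhs => rw [this, pow_succ]
      ring
    rw [e, mul_inv, pow_succ]
    field_simp
  constructor
  · intro h
    have hT : ∀ j < t - 1, ∑ α ∈ S, α ^ (j + 1) * (α ^ t + α)⁻¹ = 0 := by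
      intro j hj
      rw [Finset.sum_congr rfl (key j)]
      exact h j hj
    have hU : ∑ α ∈ S, α ^ t * ((α ^ t + α)⁻¹) ^ 2 = 0 := by
      have h1 := hT (2 ^ k - 1) (by omega)
      rw [Nat.sub_add_cancel hm] at h1
      have h2 := congrArg (· ^ 2) h1
      simp only [sum_pow_char 2] at h2
      rw [zero_pow two_ne_zero] at h2
      rw [← h2]
      refine Finset.sum_congr rfl fun α _ => ?_
      rw [mul_pow, ← pow_mul, ← ht2]
    have hU1 : ∑ α ∈ S, α * ((α ^ t + α)⁻¹) ^ 2 = 0 := by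
      have hz : (∑ α ∈ S, α * ((α ^ t + α)⁻¹) ^ 2) ^ t = 0 := by
        rw [← hU]
        conv_lhs => rw [ht, sum_pow_char_pow 2, ← ht]
        refine Finset.sum_congr rfl fun α _ => ?_
        have hb : (α ^ t + α) ^ t = α ^ t + α := by
          have := add_pow_char_pow (p := 2) (n := k + 1) (α ^ t) α
          rw [← ht, hcard] at this
          exact this.trans (add_comm α (α ^ t))
        rw [mul_pow, ← pow_mul, mul_comm 2 t, pow_mul, inv_pow, hb]
      exact pow_eq_zero_iff (by omega) |>.1 hz
    intro j hj
    rcases j with _ | j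
    · have : ∑ α ∈ S, (α ^ t * ((α ^ t + α)⁻¹) ^ 2 + α * ((α ^ t + α)⁻¹) ^ 2) = 0 := by
        rw [Finset.sum_add_distrib, hU, hU1, add_zero]
      rw [← this]
      refine Finset.sum_congr rfl fun α _ => ?_
      rw [← add_mul, pow_zero, one_mul]
      by_cases hb : α ^ t + α = 0
      · simp [hb]
      · rw [sq, ← mul_assoc, mul_inv_cancel₀ hb, one_mul]
    · exact hT j (by omega)
  · intro h j hj
    rw [← Finset.sum_congr rfl (key j)]
    exact h (j + 1) (by omega)
end

section
/- Let l ≥ 1, F = GF(2^{2l}), t = 2^l, and L₁ = {α ∈ F : α^{t−1} ≠ 1} (note 0 ∈ L₁). Every codeword S of the binary Goppa code Γ(L₁, X^{t−1}+1) satisfies that the cardinality of S \ {0} is even. (This is the all-ones parity-check row [1 … 1 0] derived for the matrix H₁ in Section 2.) -/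
open Finset
open scoped Classical

/-- Section 2 of the paper (all-ones parity row of `H₁`): over `F = GF(2^(2l))`,
`t = 2^l`, `L₁ = {α : α^(t-1) ≠ 1}` (which contains `0`), every codeword `S` of the
binary Goppa code `Γ(L₁, X^(t-1)+1)` has `|S \ {0}|` even. -/
theorem stmt_2 (l : ℕ) (hl : 1 ≤ l) (t : ℕ) (ht : t = 2 ^ l)
    (S : Finset (GaloisField 2 (2 * l)))
    (hS : ∀ α ∈ S, α ^ (t - 1) ≠ 1)
    (hcw : ∀ j < t - 1, ∑ α ∈ S, α ^ j * (α ^ (t - 1) + 1)⁻¹ = 0) :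
    Even (S \ {0}).card := by
  have h2 : 2 ≤ t := by
    rw [ht]; calc 2 = 2 ^ 1 := rfl
      _ ≤ 2 ^ l := Nat.pow_le_pow_right (by norm_num) hl
  have h0 := hcw 0 (by omega)
  simp only [pow_zero, one_mul] at h0
  have h1 : ∑ α ∈ S, ((α ^ (t - 1) + 1)⁻¹) ^ t = 0 := by
    subst ht
    rw [← sum_pow_char_pow 2 l S, h0, zero_pow (by omega)]
  have key : ∀ α ∈ S, (α ^ (t - 1) + 1)⁻¹ + ((α ^ (t - 1) + 1)⁻¹) ^ t
      = if α ≠ 0 then (1 : GaloisField 2 (2 * l)) else 0 := by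
    intro α hα
    by_cases ha : α = 0
    · subst ha
      have : t - 1 ≠ 0 := by omega
      simp [this, CharTwo.add_self_eq_zero]
    · have hne : α ^ (t - 1) + 1 ≠ 0 := fun h => hS α hα (CharTwo.add_eq_zero.mp h)
      have hq : α ^ (t * t) = α := by
        haveI : Fintype (GaloisField 2 (2 * l)) := Fintype.ofFinite _
        have hc := GaloisField.card 2 (2 * l) (by omega)
        have := FiniteField.pow_card α
        rw [← Nat.card_eq_fintype_card, hc] at this
        rwa [ht, ← pow_add, ← two_mul]
      have hu : (α ^ (t - 1)) ^ t * α ^ (t - 1) = 1 := by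
        have h3 : (α ^ (t - 1)) ^ t * α ^ (t - 1) * α = 1 * α := by
          rw [one_mul, ← pow_mul, mul_assoc, ← pow_succ, ← pow_add]
          convert hq using 2
          obtain ⟨k, rfl⟩ : ∃ k, t = k + 1 := ⟨t - 1, by omega⟩
          simp only [Nat.add_sub_cancel]; ring
        exact mul_right_cancel₀ ha h3
      have hadd : (α ^ (t - 1) + 1) ^ t = (α ^ (t - 1)) ^ t + 1 := by
        generalize α ^ (t - 1) = u
        rw [ht, add_pow_char_pow, one_pow]
      rw [if_pos ha, inv_pow]
      have hne' := pow_ne_zero t hne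
      rw [hadd] at hne' ⊢
      generalize (α ^ (t - 1)) ^ t = v at *
      generalize α ^ (t - 1) = u at *
      field_simp
      linear_combination -hu
  have h3 : ∑ α ∈ S, (if α ≠ 0 then (1 : GaloisField 2 (2 * l)) else 0) = 0 := by
    rw [← Finset.sum_congr rfl key, Finset.sum_add_distrib, h0, h1, add_zero]
  rw [Finset.sum_boole] at h3
  have h4 : S \ {0} = S.filter (fun α => α ≠ 0) := by
    ext; simp
  rw [h4]
  exact even_iff_two_dvd.mpr ((CharP.cast_eq_zero_iff (GaloisField 2 (2 * l)) 2 _).mp h3)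
end

section
/- Let l ≥ 1, F = GF(2^{2l}), t = 2^l, A ∈ F with A ≠ 0, and β ∈ F, and set C = A^t β^t + Aβ. Let L₂ = {α ∈ F : A^t α^t + Aα ≠ 0} and L₃ = {α ∈ F : A^t α^t + Aα + C ≠ 0}. Then a finite subset S ⊆ L₃ is a codeword of the binary Goppa code Γ(L₃, A^t X^t + A X + C) if and only if its translate {α + β : α ∈ S} (which is contained in L₂) is a codeword of Γ(L₂, A^t X^t + A X). (Paper's Lemma 3: Γ(L₂,G₂) ≡ Γ(L₃,G₃) via the substitution x ↦ x + β.) -/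
open Finset
open scoped Classical

theorem shift_aux {K : Type*} [Field K] (S : Finset K) (w f : K → K) (b : K) (t : ℕ)
    (h : ∀ j < t, ∑ a ∈ S, f a ^ j * w a = 0) :
    ∀ j < t, ∑ a ∈ S, (f a + b) ^ j * w a = 0 := by
  intro j hj
  simp_rw [add_pow, Finset.sum_mul]
  rw [Finset.sum_comm]
  refine Finset.sum_eq_zero fun m hm => ?_
  have hm' : m < t := by
    have := Finset.mem_range.1 hm
    omega
  have : ∀ a ∈ S, f a ^ m * b ^ (j - m) * (j.choose m : K) * w a
      = (b ^ (j - m) * (j.choose m : K)) * (f a ^ m * w a) := fun a _ => by ring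
  rw [Finset.sum_congr rfl this, ← Finset.mul_sum, h m hm', mul_zero]

/-- Paper's Lemma 3: over `F = GF(2^(2l))`, `t = 2^l`, `A ≠ 0`, `β ∈ F`,
`C = A^t β^t + A β`, a finite `S ⊆ L₃ = {α : A^t α^t + A α + C ≠ 0}` is a codeword of
`Γ(L₃, A^t X^t + A X + C)` iff its translate `{α + β : α ∈ S}` (contained in
`L₂ = {α : A^t α^t + A α ≠ 0}`) is a codeword of `Γ(L₂, A^t X^t + A X)`. -/
theorem stmt_4 (l : ℕ) (hl : 1 ≤ l) (t : ℕ) (ht : t = 2 ^ l)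
    (A β : GaloisField 2 (2 * l)) (hA : A ≠ 0)
    (C : GaloisField 2 (2 * l)) (hC : C = A ^ t * β ^ t + A * β)
    (S : Finset (GaloisField 2 (2 * l)))
    (hS : ∀ α ∈ S, A ^ t * α ^ t + A * α + C ≠ 0) :
    (∀ γ ∈ S.image (· + β), A ^ t * γ ^ t + A * γ ≠ 0) ∧
      ((∀ j < t, ∑ α ∈ S, α ^ j * (A ^ t * α ^ t + A * α + C)⁻¹ = 0) ↔
        (∀ j < t, ∑ γ ∈ S.image (· + β), γ ^ j * (A ^ t * γ ^ t + A * γ)⁻¹ = 0)) := by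
  have key : ∀ a : GaloisField 2 (2 * l),
      A ^ t * (a + β) ^ t + A * (a + β) = A ^ t * a ^ t + A * a + C := by
    intro a
    rw [hC, ht, add_pow_char_pow]
    ring
  have hsum : ∀ j, ∑ γ ∈ S.image (· + β), γ ^ j * (A ^ t * γ ^ t + A * γ)⁻¹
      = ∑ α ∈ S, (α + β) ^ j * (A ^ t * α ^ t + A * α + C)⁻¹ := by
    intro j
    rw [Finset.sum_image (fun x _ y _ hxy => add_right_cancel hxy)]
    exact Finset.sum_congr rfl fun a _ => by rw [key]
  refine ⟨?_, ?_⟩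
  · intro γ hγ
    obtain ⟨a, ha, rfl⟩ := Finset.mem_image.1 hγ
    simp only [key]
    exact hS a ha
  · simp_rw [hsum]
    constructor
    · exact fun h => shift_aux S (fun α => (A ^ t * α ^ t + A * α + C)⁻¹) (fun a => a) β t h
    · intro h
      have h2 := shift_aux S (fun α => (A ^ t * α ^ t + A * α + C)⁻¹) (fun a => a + β) (-β) t h
      simpa only [add_neg_cancel_right] using h2
end

section
/- Let l ≥ 1, F = GF(2^{2l}), t = 2^l, A ∈ F with A ≠ 0, and L₄ = {α ∈ F : A^t α^t + A^{t−1} α^{t−1} + 1 ≠ 0} (note 0 ∈ L₄). Every codeword S of the binary Goppa code Γ(L₄, A^t X^t + A^{t−1} X^{t−1} + 1) satisfies 0 ∉ S; that is, all codewords have value zero at the position corresponding to the element 0 of L₄. (Paper's Lemma 4.) -/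
open Finset

/-- Paper's Lemma 4: over `F = GF(2^(2l))`, `t = 2^l`, `A ≠ 0`,
`L₄ = {α : A^t α^t + A^(t-1) α^(t-1) + 1 ≠ 0}` (note `0 ∈ L₄`), every codeword `S` of
the binary Goppa code `Γ(L₄, A^t X^t + A^(t-1) X^(t-1) + 1)` satisfies `0 ∉ S`. -/
theorem stmt_5 (l : ℕ) (hl : 1 ≤ l) (t : ℕ) (ht : t = 2 ^ l)
    (A : GaloisField 2 (2 * l)) (hA : A ≠ 0)
    (S : Finset (GaloisField 2 (2 * l)))
    (hS : ∀ α ∈ S, A ^ t * α ^ t + A ^ (t - 1) * α ^ (t - 1) + 1 ≠ 0)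
    (hcw : ∀ j < t,
      ∑ α ∈ S, α ^ j * (A ^ t * α ^ t + A ^ (t - 1) * α ^ (t - 1) + 1)⁻¹ = 0) :
    0 ∉ S := by
  classical
  intro h0
  have : Fact (Nat.Prime 2) := ⟨Nat.prime_two⟩
  have ht2 : 2 ≤ t := by
    rw [ht]; exact le_self_pow (by norm_num) (by omega)
  obtain ⟨u, rfl⟩ : ∃ u, t = u + 1 := ⟨t - 1, by omega⟩
  have hu : u ≠ 0 := by omega
  simp only [Nat.add_sub_cancel] at hS hcw
  have : Fintype (GaloisField 2 (2 * l)) := Fintype.ofFinite _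
  have hcard : ∀ x : GaloisField 2 (2 * l), x ^ ((u + 1) * (u + 1)) = x := by
    intro x
    have h1 := FiniteField.pow_card x
    have h2 : Fintype.card (GaloisField 2 (2 * l)) = (u + 1) * (u + 1) := by
      rw [← Nat.card_eq_fintype_card, GaloisField.card 2 (2 * l) (by omega), ht, ← pow_add]
      congr 1; omega
    rwa [h2] at h1
  have hadd : ∀ x y : GaloisField 2 (2 * l), (x + y) ^ (u + 1) = x ^ (u + 1) + y ^ (u + 1) := by
    intro x y
    rw [ht]; exact add_pow_char_pow x y 2 l
  have e0 := hcw 0 (by omega)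
  have e1 := hcw u (by omega)
  have e2 := congrArg (· ^ (u + 1)) e0
  simp only [pow_zero, one_mul, zero_pow (Nat.succ_ne_zero u)] at e2
  have hsum : (∑ α ∈ S, (A ^ (u + 1) * α ^ (u + 1) + A ^ u * α ^ u + 1)⁻¹) ^ (u + 1)
      = ∑ α ∈ S, ((A ^ (u + 1) * α ^ (u + 1) + A ^ u * α ^ u + 1)⁻¹) ^ (u + 1) := by
    rw [ht]; exact sum_pow_char_pow 2 l _ _
  rw [hsum] at e2
  have key : ∀ α ∈ S, ((A ^ (u + 1) * α ^ (u + 1) + A ^ u * α ^ u + 1)⁻¹) ^ (u + 1)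
      = A ^ u * (α ^ u * (A ^ (u + 1) * α ^ (u + 1) + A ^ u * α ^ u + 1)⁻¹)
        + if α = 0 then 1 else 0 := by
    intro α hα
    have hG := hS α hα
    by_cases h : α = 0
    · subst h
      simp [hu]
    · have hb : A * α ≠ 0 := mul_ne_zero hA h
      simp only [h, if_false, add_zero]
      rw [← mul_assoc]
      simp only [← mul_pow] at hG ⊢
      generalize A * α = b at hb hG ⊢
      have hGt : b ^ u * (b ^ (u + 1) + b ^ u + 1) ^ (u + 1) = b ^ (u + 1) + b ^ u + 1 := by
        rw [hadd, hadd, one_pow, ← pow_mul, hcard, ← pow_mul]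
        have h3 : b ^ u * b ^ (u * (u + 1)) = 1 := by
          apply mul_left_cancel₀ hb
          have := hcard b
          calc b * (b ^ u * b ^ (u * (u + 1))) = b ^ ((u + 1) * (u + 1)) := by ring
            _ = b * 1 := by rw [this, mul_one]
        linear_combination h3
      rw [inv_pow, inv_eq_iff_eq_inv, mul_inv, inv_inv, eq_inv_mul_iff_mul_eq₀ (pow_ne_zero _ hb)]
      exact hGt
  rw [Finset.sum_congr rfl key, Finset.sum_add_distrib, ← Finset.mul_sum, e1] at e2
  simp [h0] at e2
end

section
/- Let l ≥ 1, F = GF(2^{2l}), t = 2^l, and L₄ = {α ∈ F : α^t + α^{t−1} + 1 ≠ 0}. If S ⊆ L₄ \ {0} is a codeword of the binary Goppa code Γ(L₄ \ {0}, X^t + X^{t−1} + 1), then ∑_{α ∈ S} (α·(α^t + α^{t−1} + 1))⁻¹ = 0 in F. (Paper's Lemma 5: the extra parity-check row [1/(α(α^t+α^{t−1}+1))]_α is a linear combination of the rows of the parity-check matrix H₄*.) -/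
open Finset

theorem aux_main {K : Type*} [Field K] [CharP K 2] (l : ℕ) (hl : 1 ≤ l) (t : ℕ) (ht : t = 2 ^ l)
    (hF : ∀ x : K, (x ^ t) ^ t = x)
    (S : Finset K)
    (hS : ∀ α ∈ S, α ≠ 0 ∧ α ^ t + α ^ (t - 1) + 1 ≠ 0)
    (hcw : ∀ j < t, ∑ α ∈ S, α ^ j * (α ^ t + α ^ (t - 1) + 1)⁻¹ = 0) :
    ∑ α ∈ S, (α * (α ^ t + α ^ (t - 1) + 1))⁻¹ = 0 := by
  have h2 : (2 : K) = 0 := CharTwo.two_eq_zero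
  haveI : Fact (Nat.Prime 2) := ⟨Nat.prime_two⟩
  obtain ⟨m, hm⟩ : ∃ m, t = 2 * m := by
    obtain ⟨k, rfl⟩ : ∃ k, l = k + 1 := ⟨l - 1, by omega⟩
    exact ⟨2 ^ k, by rw [ht, pow_succ]; ring⟩
  have hm1 : 1 ≤ m := by
    have : 0 < t := by rw [ht]; positivity
    omega
  have addt : ∀ x y : K, (x + y) ^ t = x ^ t + y ^ t := by
    intro x y; rw [ht]; exact add_pow_char_pow x y 2 l
  have sumt : ∀ f : K → K, (∑ α ∈ S, f α) ^ t = ∑ α ∈ S, f α ^ t := by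
    intro f; rw [ht]; exact sum_pow_char_pow 2 l S f
  have sum2 : ∀ f : K → K, (∑ α ∈ S, f α) ^ 2 = ∑ α ∈ S, f α ^ 2 := by
    intro f; exact sum_pow_char 2 S f
  obtain ⟨D, hD⟩ : ∃ D : K → K, ∀ α, D α = α * (α ^ t + α ^ (t - 1) + 1) := ⟨_, fun _ => rfl⟩
  have hD0 : ∀ α ∈ S, D α ≠ 0 := fun α h => by
    rw [hD]; exact mul_ne_zero (hS α h).1 (hS α h).2
  have hD1 : ∀ α, D α = α * α ^ t + α ^ t + α := by
    intro α
    have : α * α ^ (t - 1) = α ^ t := by rw [← pow_succ']; congr 1; omega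
    rw [hD, ← this]; ring
  have hDt : ∀ α, D α ^ t = D α := by
    intro α
    rw [hD1, addt, addt, mul_pow, hF]; ring
  have hDc : ∀ α, D α = (α + 1) ^ (t + 1) + 1 := by
    intro α
    rw [pow_succ, addt, one_pow, hD1]
    linear_combination -h2
  have hz : ∀ k j, k + j < t → ∑ α ∈ S, (α + 1) ^ k * α ^ (j + 1) * (D α)⁻¹ = 0 := by
    intro k
    induction k with
    | zero =>
      intro j hj
      rw [← hcw j (by omega)]
      refine sum_congr rfl fun α h => ?_
      rw [hD, mul_inv, pow_succ]
      have := (hS α h).1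
      field_simp
    | succ k ih =>
      intro j hj
      have e1 := ih j (by omega)
      have e2 := ih (j + 1) (by omega)
      rw [← add_zero (0 : K)]
      nth_rw 1 [← e1]
      rw [← e2, ← sum_add_distrib]
      exact sum_congr rfl fun α _ => by ring
  have hu : ∀ k ≤ t, ∑ α ∈ S, (α + 1) ^ k * (D α)⁻¹ = ∑ α ∈ S, (D α)⁻¹ := by
    intro k
    induction k with
    | zero => intro _; simp
    | succ k ih =>
      intro hk
      rw [← ih (by omega), ← add_zero (∑ α ∈ S, (α + 1) ^ k * (D α)⁻¹), ← hz k 0 (by omega),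
        ← sum_add_distrib]
      exact sum_congr rfl fun α _ => by ring
  have hst : (∑ α ∈ S, (D α)⁻¹) ^ t = ∑ α ∈ S, (D α)⁻¹ := by
    rw [sumt]
    exact sum_congr rfl fun α _ => by rw [inv_pow, hDt]
  have goal : ∑ α ∈ S, (D α)⁻¹ = 0 := by
    have vt : ∑ α ∈ S, (α + 1) ^ t * ((D α)⁻¹) ^ 2 = (∑ α ∈ S, (D α)⁻¹) ^ 2 := by
      rw [← hu m (by omega), sum2]
      exact sum_congr rfl fun α _ => by rw [hm]; ring
    have vt2 : ∑ α ∈ S, (α + 1) ^ (t + 2) * ((D α)⁻¹) ^ 2 = (∑ α ∈ S, (D α)⁻¹) ^ 2 := by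
      rw [← hu (m + 1) (by omega), sum2]
      exact sum_congr rfl fun α _ => by rw [hm]; ring
    have v1 : ∑ α ∈ S, (D α)⁻¹ = ∑ α ∈ S, (α + 1) ^ (t + 2) * ((D α)⁻¹) ^ 2
        + ∑ α ∈ S, (α + 1) * ((D α)⁻¹) ^ 2 := by
      rw [← hu 1 (by omega), ← sum_add_distrib]
      refine sum_congr rfl fun α h => ?_
      have e : D α * (D α)⁻¹ = 1 := mul_inv_cancel₀ (hD0 α h)
      have e' := hDc α
      linear_combination (-(α + 1) * (D α)⁻¹) * e + (α + 1) * (D α)⁻¹ ^ 2 * e'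
    have v1t : (∑ α ∈ S, (α + 1) * ((D α)⁻¹) ^ 2) ^ t = ∑ α ∈ S, (α + 1) ^ t * ((D α)⁻¹) ^ 2 := by
      rw [sumt]
      refine sum_congr rfl fun α h => ?_
      rw [mul_pow, pow_right_comm, inv_pow (D α) t, hDt]
    have e3 := congrArg (fun z : K => z ^ t) v1
    beta_reduce at e3
    rw [addt, v1t, vt, vt2, hst, pow_right_comm, hst] at e3
    linear_combination e3 + (∑ α ∈ S, (D α)⁻¹) ^ 2 * h2
  rw [← goal]
  exact sum_congr rfl fun α _ => by rw [hD]

/-- Paper's Lemma 5: over `F = GF(2^(2l))`, `t = 2^l`,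
`L₄ \ {0} = {α : α ≠ 0 ∧ α^t + α^(t-1) + 1 ≠ 0}`, every codeword `S` of the binary
Goppa code `Γ(L₄ \ {0}, X^t + X^(t-1) + 1)` also satisfies the extra parity check
`∑_{α ∈ S} (α (α^t + α^(t-1) + 1))⁻¹ = 0`. -/
theorem stmt_6 (l : ℕ) (hl : 1 ≤ l) (t : ℕ) (ht : t = 2 ^ l)
    (S : Finset (GaloisField 2 (2 * l)))
    (hS : ∀ α ∈ S, α ≠ 0 ∧ α ^ t + α ^ (t - 1) + 1 ≠ 0)
    (hcw : ∀ j < t, ∑ α ∈ S, α ^ j * (α ^ t + α ^ (t - 1) + 1)⁻¹ = 0) :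
    ∑ α ∈ S, (α * (α ^ t + α ^ (t - 1) + 1))⁻¹ = 0 := by
  refine aux_main l hl t ht ?_ S hS hcw
  intro x
  haveI : Fintype (GaloisField 2 (2 * l)) := Fintype.ofFinite _
  have hc : Fintype.card (GaloisField 2 (2 * l)) = t * t := by
    rw [← Nat.card_eq_fintype_card, GaloisField.card 2 (2 * l) (by omega), ht]
    ring
  rw [← pow_mul, ← hc]
  exact FiniteField.pow_card x
end

section
/- Let l ≥ 1, F = GF(2^{2l}), t = 2^l, L₃ = {α ∈ F : α^t + α + 1 ≠ 0}, and L₄ = {α ∈ F : α^t + α^{t−1} + 1 ≠ 0}. If S ⊆ L₃ is a codeword of the binary Goppa code Γ(L₃, X^t + X + 1) with 0 ∉ S (i.e., S belongs to the code shortened at the position 0), then the set of inverses {α⁻¹ : α ∈ S} is contained in L₄ and is a codeword of Γ(L₄, X^t + X^{t−1} + 1). (Paper's Lemma 6: Γ(L₃*, G₃) ⊂ Γ(L₄, G₄), via the substitution αᵢ ↦ αᵢ⁻¹.) -/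
open Finset
open scoped Classical

/-- Paper's Lemma 6: over `F = GF(2^(2l))`, `t = 2^l`, if `S ⊆ L₃ = {α : α^t + α + 1 ≠ 0}`
is a codeword of `Γ(L₃, X^t + X + 1)` with `0 ∉ S`, then `{α⁻¹ : α ∈ S}` is contained in
`L₄ = {α : α^t + α^(t-1) + 1 ≠ 0}` and is a codeword of `Γ(L₄, X^t + X^(t-1) + 1)`. -/
theorem stmt_7 (l : ℕ) (hl : 1 ≤ l) (t : ℕ) (ht : t = 2 ^ l)
    (S : Finset (GaloisField 2 (2 * l)))
    (hS : ∀ α ∈ S, α ^ t + α + 1 ≠ 0)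
    (h0 : 0 ∉ S)
    (hcw : ∀ j < t, ∑ α ∈ S, α ^ j * (α ^ t + α + 1)⁻¹ = 0) :
    (∀ γ ∈ S.image (·⁻¹), γ ^ t + γ ^ (t - 1) + 1 ≠ 0) ∧
      (∀ j < t, ∑ γ ∈ S.image (·⁻¹), γ ^ j * (γ ^ t + γ ^ (t - 1) + 1)⁻¹ = 0) := by
  have ht2 : 2 ≤ t := by
    rw [ht]
    calc 2 = 2 ^ 1 := rfl
      _ ≤ 2 ^ l := Nat.pow_le_pow_right (by norm_num) hl
  haveI : Fintype (GaloisField 2 (2 * l)) := Fintype.ofFinite _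
  have hcard : Fintype.card (GaloisField 2 (2 * l)) = t * t := by
    rw [← Nat.card_eq_fintype_card, GaloisField.card 2 (2 * l) (by omega), ht]
    ring
  have hfrob : ∀ α : GaloisField 2 (2 * l), (α ^ t) ^ t = α := by
    intro α
    rw [← pow_mul, ← hcard, FiniteField.pow_card]
  have hadd : ∀ x y : GaloisField 2 (2 * l), (x + y) ^ t = x ^ t + y ^ t := by
    intro x y
    rw [ht, add_pow_char_pow]
  have hG : ∀ α : GaloisField 2 (2 * l), (α ^ t + α + 1) ^ t = α ^ t + α + 1 := by
    intro α
    rw [hadd, hadd, hfrob, one_pow]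
    ring
  have hne : ∀ α ∈ S, α ≠ 0 := fun α hα h => h0 (h ▸ hα)
  have key : ∀ α ∈ S, (α⁻¹) ^ t + (α⁻¹) ^ (t - 1) + 1 = (α ^ t)⁻¹ * (α ^ t + α + 1) := by
    intro α hα
    have h := hne α hα
    obtain ⟨k, rfl⟩ : ∃ k, t = k + 1 := ⟨t - 1, by omega⟩
    simp only [Nat.add_sub_cancel, inv_pow]
    field_simp
    ring
  refine ⟨?_, ?_⟩
  · intro γ hγ
    obtain ⟨α, hα, rfl⟩ := Finset.mem_image.mp hγ
    rw [key α hα]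
    exact mul_ne_zero (inv_ne_zero (pow_ne_zero _ (hne α hα))) (hS α hα)
  · intro j hj
    rw [Finset.sum_image (fun a _ b _ h => inv_injective h)]
    have hterm : ∀ α ∈ S, (α⁻¹) ^ j * ((α⁻¹) ^ t + (α⁻¹) ^ (t - 1) + 1)⁻¹
        = α ^ (t - j) * (α ^ t + α + 1)⁻¹ := by
      intro α hα
      rw [key α hα, mul_inv, inv_inv, ← mul_assoc, inv_pow, pow_sub₀ α (hne α hα) hj.le]
      ring
    rw [Finset.sum_congr rfl hterm]
    rcases Nat.eq_zero_or_pos j with rfl | hj0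
    · have h1 := congrArg (· ^ t) (hcw 1 (by omega))
      simp only [pow_one] at h1
      rw [zero_pow (by omega)] at h1
      have h2 : (∑ α ∈ S, α * (α ^ t + α + 1)⁻¹) ^ t
          = ∑ α ∈ S, (α * (α ^ t + α + 1)⁻¹) ^ t := by
        have := sum_pow_char_pow (R := GaloisField 2 (2 * l)) 2 l S
          (fun α => α * (α ^ t + α + 1)⁻¹)
        rw [← ht] at this
        exact this
      rw [h2] at h1
      rw [← h1]
      refine Finset.sum_congr rfl fun α _ => ?_
      rw [mul_pow, inv_pow, hG, Nat.sub_zero]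
    · exact hcw (t - j) (by omega)
end

section
/- Let l ≥ 1, F = GF(2^{2l}), t = 2^l, L₄ = {α ∈ F : α^t + α^{t−1} + 1 ≠ 0}, and L₅ = L₄ \ {0}. For every finite subset S ⊆ L₅: S is a codeword of the binary Goppa code Γ(L₄, X^t + X^{t−1} + 1) if and only if S is a codeword of Γ(L₅, X^{t+1} + X^t + X). (Paper's Lemma 7: Γ(L₄,G₄) ≡ Γ(L₅,G₅) where G₅(x) = x·G₄(x); equivalently, the parity-check matrices H₅ and H₄* coincide.) -/
open Finset

lemma goppa_aux {F : Type*} [Field F] [CharP F 2] (l m t : ℕ) (ht : t = 2 ^ l) (hm : 1 ≤ m)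
    (htm : t = 2 * m) (hF : ∀ a : F, (a ^ t) ^ t = a) (S : Finset F)
    (hS : ∀ α ∈ S, α ^ (t + 1) + α ^ t + α ≠ 0)
    (h : ∀ j, 1 ≤ j → j ≤ t → ∑ α ∈ S, α ^ j * (α ^ (t + 1) + α ^ t + α)⁻¹ = 0) :
    ∑ α ∈ S, (α ^ (t + 1) + α ^ t + α)⁻¹ = 0 := by
  haveI : Fact (Nat.Prime 2) := ⟨Nat.prime_two⟩
  haveI : ExpChar F 2 := ExpChar.prime Nat.prime_two
  set c : F → F := fun α => (α ^ (t + 1) + α ^ t + α)⁻¹ with hc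
  have hcF : ∀ a, c a ^ t = c a := by
    intro a
    simp only [hc, inv_pow]
    congr 1
    have h1 : ∀ x y : F, (x + y) ^ t = x ^ t + y ^ t := by
      intro x y; rw [ht]; exact add_pow_expChar_pow x y 2 l
    rw [h1, h1, hF, pow_succ, mul_pow, hF]
    ring
  have hone : ∀ a ∈ S, c a = c a ^ 2 * (a ^ (t + 1) + a ^ t + a) := by
    intro a ha
    have := hS a ha
    simp only [hc]
    field_simp
  have beven : ∀ i, 1 ≤ i → i ≤ t → ∑ a ∈ S, a ^ (2 * i) * c a ^ 2 = 0 := by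
    intro i h1 h2
    have := congrArg (· ^ 2) (h i h1 h2)
    simp only [sum_pow_char 2] at this
    rw [zero_pow two_ne_zero] at this
    rw [← this]
    exact Finset.sum_congr rfl fun a _ => by simp only [hc]; ring
  have hb2 := beven 1 le_rfl (by omega)
  have hbt := beven m hm (by omega)
  have hbt2 := beven (m + 1) (by omega) (by omega)
  have hbt1 : ∑ a ∈ S, a ^ (t + 1) * c a ^ 2 = 0 := by
    have h1 := h 1 le_rfl (by omega)
    have : ∑ a ∈ S, a ^ 1 * c a = ∑ a ∈ S, a ^ (2 * (m + 1)) * c a ^ 2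
        + ∑ a ∈ S, a ^ (t + 1) * c a ^ 2 + ∑ a ∈ S, a ^ (2 * 1) * c a ^ 2 := by
      rw [← sum_add_distrib, ← sum_add_distrib]
      refine sum_congr rfl fun a ha => ?_
      conv_lhs => rw [hone a ha]
      rw [htm]; ring
    rw [hbt2, hb2, zero_add, add_zero] at this
    rw [← this]; exact h1
  have hb1 : ∑ a ∈ S, a * c a ^ 2 = 0 := by
    have ht0 : t ≠ 0 := by omega
    refine pow_eq_zero_iff ht0 |>.1 ?_
    rw [← hbt]
    conv_lhs => rw [ht]
    rw [sum_pow_char_pow, ← ht]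
    refine sum_congr rfl fun a _ => ?_
    rw [mul_pow, pow_right_comm, hcF, htm]
  calc ∑ a ∈ S, c a = ∑ a ∈ S, a ^ (t + 1) * c a ^ 2
        + ∑ a ∈ S, a ^ (2 * m) * c a ^ 2 + ∑ a ∈ S, a * c a ^ 2 := by
        rw [← sum_add_distrib, ← sum_add_distrib]
        refine sum_congr rfl fun a ha => ?_
        conv_lhs => rw [hone a ha]
        rw [htm]; ring
    _ = 0 := by rw [hbt1, hbt, hb1]; simp

/-- Paper's Lemma 7: over `F = GF(2^(2l))`, `t = 2^l`,
`L₅ = L₄ \ {0} = {α : α ≠ 0 ∧ α^t + α^(t-1) + 1 ≠ 0}`, a finite `S ⊆ L₅` is a codeword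
of `Γ(L₄, X^t + X^(t-1) + 1)` iff it is a codeword of `Γ(L₅, X^(t+1) + X^t + X)`. -/
theorem stmt_8 (l : ℕ) (hl : 1 ≤ l) (t : ℕ) (ht : t = 2 ^ l)
    (S : Finset (GaloisField 2 (2 * l)))
    (hS : ∀ α ∈ S, α ≠ 0 ∧ α ^ t + α ^ (t - 1) + 1 ≠ 0) :
    (∀ j < t, ∑ α ∈ S, α ^ j * (α ^ t + α ^ (t - 1) + 1)⁻¹ = 0) ↔
      (∀ j < t + 1, ∑ α ∈ S, α ^ j * (α ^ (t + 1) + α ^ t + α)⁻¹ = 0) := by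
  obtain ⟨k, rfl⟩ : ∃ k, l = k + 1 := ⟨l - 1, by omega⟩
  have htm : t = 2 * 2 ^ k := by rw [ht]; ring
  have hm : 1 ≤ 2 ^ k := Nat.one_le_two_pow
  have hfac : ∀ α : GaloisField 2 (2 * (k + 1)),
      α ^ (t + 1) + α ^ t + α = α * (α ^ t + α ^ (t - 1) + 1) := by
    intro α
    obtain ⟨s, hs⟩ : ∃ s, t = s + 1 := ⟨t - 1, by omega⟩
    rw [hs, Nat.add_sub_cancel]; ring
  have hsh : ∀ j, ∑ α ∈ S, α ^ (j + 1) * (α ^ (t + 1) + α ^ t + α)⁻¹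
      = ∑ α ∈ S, α ^ j * (α ^ t + α ^ (t - 1) + 1)⁻¹ := by
    intro j
    refine sum_congr rfl fun α hα => ?_
    obtain ⟨h0, h1⟩ := hS α hα
    rw [hfac, mul_inv, pow_succ]
    field_simp
  constructor
  · intro h j hj
    rcases j with _ | j
    · simp only [pow_zero, one_mul]
      refine goppa_aux (k + 1) (2 ^ k) t ht hm htm ?_ S ?_ ?_
      · intro a
        haveI : Fintype (GaloisField 2 (2 * (k + 1))) := Fintype.ofFinite _
        have hcard : Fintype.card (GaloisField 2 (2 * (k + 1))) = t * t := by
          rw [← Nat.card_eq_fintype_card, GaloisField.card 2 _ (by omega), ht]; ring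
        rw [← pow_mul, ← hcard, FiniteField.pow_card]
      · intro α hα
        rw [hfac]
        exact mul_ne_zero (hS α hα).1 (hS α hα).2
      · intro j h1 h2
        obtain ⟨i, rfl⟩ : ∃ i, j = i + 1 := ⟨j - 1, by omega⟩
        rw [hsh]; exact h i (by omega)
    · rw [hsh]; exact h j (by omega)
  · intro h j hj
    rw [← hsh]; exact h (j + 1) (by omega)
end

section
/- Let l ≥ 1, F = GF(2^{2l}), and t = 2^l. Let C, A, β ∈ F with C^t = C, and set V = A^t + C·β. Then in F[X] one has the polynomial identity (C·X^{t+1} + A^t·X^t + A·X).comp(X + β) = C·X^{t+1} + V·X^t + V^t·X + (C·β^{t+1} + A^t·β^t + A·β); in particular the coefficient of X equals A + C·β^t = (A^t + C·β)^t. (Polynomial identity underlying the paper's Lemma 8: Γ(L₅,G₅) ≡ Γ(L₆,G₆) with G₆(x) = Rx^{t+1} + V^t x^t + V x + 1.) -/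
open Polynomial

/-- Polynomial identity underlying the paper's Lemma 8: over `F = GF(2^(2l))`, `t = 2^l`,
`C^t = C`, `V = A^t + C β`, one has
`(C X^(t+1) + A^t X^t + A X) ∘ (X + β) = C X^(t+1) + V X^t + V^t X + (C β^(t+1) + A^t β^t + A β)`,
and in particular the coefficient of `X` satisfies `A + C β^t = (A^t + C β)^t`. -/
theorem stmt_10 (l : ℕ) (hl : 1 ≤ l) (t : ℕ) (ht : t = 2 ^ l)
    (C A β : GaloisField 2 (2 * l)) (hC : C ^ t = C)
    (V : GaloisField 2 (2 * l)) (hV : V = A ^ t + C * β) :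
    (Polynomial.C C * X ^ (t + 1) + Polynomial.C (A ^ t) * X ^ t
        + Polynomial.C A * X).comp (X + Polynomial.C β)
      = Polynomial.C C * X ^ (t + 1) + Polynomial.C V * X ^ t + Polynomial.C (V ^ t) * X
        + Polynomial.C (C * β ^ (t + 1) + A ^ t * β ^ t + A * β)
    ∧ A + C * β ^ t = (A ^ t + C * β) ^ t := by
  have hA : (A ^ t) ^ t = A := by
    have hcard : Nat.card (GaloisField 2 (2 * l)) = 2 ^ (2 * l) :=
      GaloisField.card 2 (2 * l) (by omega)
    haveI : Finite (GaloisField 2 (2 * l)) :=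
      Nat.finite_of_card_ne_zero (by rw [hcard]; positivity)
    haveI := Fintype.ofFinite (GaloisField 2 (2 * l))
    have h := FiniteField.pow_card A
    rw [← Nat.card_eq_fintype_card, hcard] at h
    rw [← pow_mul, ht, ← pow_add, ← two_mul]
    exact h
  have key : A + C * β ^ t = (A ^ t + C * β) ^ t := by
    have h : (A ^ t + C * β) ^ t = (A ^ t) ^ t + (C * β) ^ t := by
      subst ht; exact add_pow_char_pow _ _ 2 l
    rw [h, hA, mul_pow, hC]
  refine ⟨?_, key⟩
  have hX : (X + Polynomial.C β) ^ t = X ^ t + Polynomial.C β ^ t := by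
    subst ht; exact add_pow_char_pow _ _ 2 l
  rw [hV, ← key]
  simp only [add_comp, mul_comp, C_comp, pow_comp, X_comp, pow_succ, hX, map_add, map_mul, map_pow]
  ring
end

section
/- Let l ≥ 1, F = GF(2^{2l}), and t = 2^l. Let R, V ∈ F with R ≠ 0 and R^t = R (i.e., R ∈ GF(2^l)). Then in F[X] one has the polynomial identity (R·X^{t+1} + V^t·X^t + V·X + 1).comp(X + V^t·R⁻¹) = R·X^{t+1} + (1 + V^{t+1}·R⁻¹); that is, substituting x ↦ x + V^t/R into G₆(x) = Rx^{t+1} + V^t x^t + Vx + 1 yields a binomial of the form Rx^{t+1} + const. (Polynomial identity underlying the paper's Lemma 9: Γ(L₆,G₆) ≡ Γ(L₇,G₇) with G₇(x) = Bx^{t+1} + 1.) -/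
open Polynomial

/-- Polynomial identity underlying the paper's Lemma 9: over `F = GF(2^(2l))`, `t = 2^l`,
`R ≠ 0`, `R^t = R`, substituting `x ↦ x + V^t/R` into `G₆(x) = R x^(t+1) + V^t x^t + V x + 1`
gives `R x^(t+1) + (1 + V^(t+1)/R)`. -/
theorem stmt_11 (l : ℕ) (hl : 1 ≤ l) (t : ℕ) (ht : t = 2 ^ l)
    (R V : GaloisField 2 (2 * l)) (hR : R ≠ 0) (hRt : R ^ t = R) :
    (Polynomial.C R * X ^ (t + 1) + Polynomial.C (V ^ t) * X ^ t
        + Polynomial.C V * X + 1).comp (X + Polynomial.C (V ^ t * R⁻¹))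
      = Polynomial.C R * X ^ (t + 1) + Polynomial.C (1 + V ^ (t + 1) * R⁻¹) := by
  have hV : (V ^ t) ^ t = V := by
    have hc : Nat.card (GaloisField 2 (2 * l)) = 2 ^ (2 * l) :=
      GaloisField.card 2 (2 * l) (by omega)
    haveI : Fintype (GaloisField 2 (2 * l)) := Fintype.ofFinite _
    have h := FiniteField.pow_card V
    rw [← Nat.card_eq_fintype_card, hc] at h
    rw [← pow_mul, ht, ← pow_add, ← two_mul]
    exact h
  have ha : (V ^ t * R⁻¹) ^ t = V * R⁻¹ := by
    rw [mul_pow, hV, inv_pow, hRt]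
  have hX : (X + C (V ^ t * R⁻¹)) ^ t = X ^ t + C (V * R⁻¹) := by
    rw [← ha, C_pow, ht]
    exact add_pow_char_pow _ _ _ _
  have h2 : (2 : (GaloisField 2 (2 * l))[X]) = 0 := CharTwo.two_eq_zero
  have hRS : C R * C R⁻¹ = (1 : (GaloisField 2 (2 * l))[X]) := by
    rw [← C_mul, mul_inv_cancel₀ hR, C_1]
  simp only [add_comp, mul_comp, C_comp, pow_comp, X_comp, one_comp]
  rw [pow_succ, hX, pow_succ V t]
  simp only [C_mul, C_add, C_1]
  generalize C (V ^ t) = W at *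
  generalize C R⁻¹ = S at *
  generalize C R = r at *
  generalize C V = v at *
  rw [pow_succ]
  generalize (X : (GaloisField 2 (2 * l))[X]) ^ t = Y at *
  linear_combination (W * Y + v * X + v * W * S) * hRS + (W * Y + v * X + W * v * S) * h2
end

section
/- Let l ≥ 2, F = GF(2^{2l}), t = 2^l, and L₇ = {α ∈ F : α^{t+1} ≠ 1}. Then the binary Goppa code Γ(L₇, X^{t+1} + 1) has a codeword of cardinality exactly 2t + 3 = 2^{l+1} + 3. (Constructive part of the paper's Lemma 10: for A ∈ F with A^{2^l+1} ≠ 1 and B = A⁻¹, the set {A·ζ : ζ^{t+1} = 1} ∪ {B·ζ : ζ^{t+1} = 1} ∪ {0} of 2(t+1)+1 elements is such a codeword.) -/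
open Finset

theorem aux_14 {F : Type*} [Field F] [CharP F 2] [DecidableEq F] (t : ℕ) (hte : Even t) (z A : F)
    (hz : IsPrimitiveRoot z (t + 1)) (hA : A ≠ 0) (hA1 : A ^ (t + 1) ≠ 1) :
    ∃ S : Finset F,
      (∀ α ∈ S, α ^ (t + 1) ≠ 1) ∧
      S.card = 2 * t + 3 ∧
      (∀ j < t + 1, ∑ α ∈ S, α ^ j * (α ^ (t + 1) + 1)⁻¹ = 0) := by
  set T : F → Finset F := fun a => (range (t + 1)).image (fun i => a * z ^ i) with hT
  have hinj : ∀ a : F, a ≠ 0 → Set.InjOn (fun i => a * z ^ i) (range (t + 1) : Finset ℕ) := by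
    intro a ha i hi j hj h
    simp only [coe_range, Set.mem_Iio] at hi hj
    exact hz.pow_inj hi hj (mul_left_cancel₀ ha h)
  have hpow : ∀ a : F, ∀ i : ℕ, (a * z ^ i) ^ (t + 1) = a ^ (t + 1) := by
    intro a i
    rw [mul_pow, ← pow_mul, mul_comm i, pow_mul, hz.pow_eq_one, one_pow, mul_one]
  have hTn : ∀ a x, x ∈ T a → x ^ (t + 1) = a ^ (t + 1) := by
    intro a x hx
    obtain ⟨i, -, rfl⟩ := mem_image.1 hx
    exact hpow a i
  have hTc : ∀ a : F, a ≠ 0 → (T a).card = t + 1 := by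
    intro a ha
    rw [hT, card_image_of_injOn (hinj a ha), card_range]
  have htt : ((t + 1 : ℕ) : F) = 1 := by
    have : ((t : ℕ) : F) = 0 := (CharP.cast_eq_zero_iff F 2 t).2 hte.two_dvd
    simp [this]
  have hTs : ∀ a : F, a ≠ 0 → ∀ j < t + 1, ∑ α ∈ T a, α ^ j * (α ^ (t + 1) + 1)⁻¹ =
      if j = 0 then (a ^ (t + 1) + 1)⁻¹ else 0 := by
    intro a ha j hj
    rw [hT, sum_image (hinj a ha)]
    simp only [hpow]
    split_ifs with h0
    · subst h0
      simp only [pow_zero, one_mul, sum_const, card_range, nsmul_eq_mul, htt]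
    · have hne : z ^ j ≠ 1 := hz.pow_ne_one_of_pos_of_lt h0 hj
      have hg : ∑ i ∈ range (t + 1), (z ^ j) ^ i = 0 := by
        have := mul_geom_sum (z ^ j) (t + 1)
        rw [← pow_mul, mul_comm j, pow_mul, hz.pow_eq_one, one_pow, sub_self] at this
        exact (mul_eq_zero.1 this).resolve_left (sub_ne_zero.2 hne)
      rw [← sum_mul]
      have : ∑ i ∈ range (t + 1), (a * z ^ i) ^ j = a ^ j * ∑ i ∈ range (t + 1), (z ^ j) ^ i := by
        rw [mul_sum]
        refine sum_congr rfl fun i _ => ?_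
        rw [mul_pow, ← pow_mul, ← pow_mul, mul_comm i]
      rw [this, hg, mul_zero, zero_mul]
  have hc0 : A ^ (t + 1) ≠ 0 := pow_ne_zero _ hA
  have hB : A⁻¹ ≠ 0 := inv_ne_zero hA
  have h11 : (1 : F) + 1 = 0 := CharTwo.add_self_eq_zero 1
  have hc1 : A ^ (t + 1) + 1 ≠ 0 := by
    intro h
    exact hA1 (by linear_combination h - h11)
  have hd : Disjoint (T A) (T A⁻¹) := by
    rw [disjoint_left]
    intro x h1 h2
    have h := (hTn _ _ h1).symm.trans (hTn _ _ h2)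
    rw [inv_pow] at h
    have hm := mul_inv_cancel₀ hc0
    rw [← h] at hm
    have : (A ^ (t + 1) + 1) * (A ^ (t + 1) + 1) = 0 := by
      linear_combination hm + (A ^ (t + 1) + 1) * h11
    exact hc1 (mul_self_eq_zero.1 this)
  have h0 : ∀ a : F, a ≠ 0 → (0 : F) ∉ T a := by
    intro a ha h
    have := hTn _ _ h
    rw [zero_pow (Nat.succ_ne_zero t)] at this
    exact pow_ne_zero _ ha this.symm
  have hn : (0 : F) ∉ T A ∪ T A⁻¹ := by
    simp only [mem_union, not_or]
    exact ⟨h0 _ hA, h0 _ hB⟩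
  refine ⟨insert 0 (T A ∪ T A⁻¹), ?_, ?_, ?_⟩
  · intro α hα
    rcases mem_insert.1 hα with rfl | hα
    · simp
    rcases mem_union.1 hα with hα | hα
    · rwa [hTn _ _ hα]
    · rw [hTn _ _ hα, inv_pow]
      simpa using hA1
  · rw [card_insert_of_notMem hn, card_union_of_disjoint hd, hTc _ hA, hTc _ hB]
    ring
  · intro j hj
    rw [sum_insert hn, sum_union hd, hTs _ hA j hj, hTs _ hB j hj]
    split_ifs with hj0
    · subst hj0
      have e : (A⁻¹ ^ (t + 1) + 1)⁻¹ = A ^ (t + 1) * (A ^ (t + 1) + 1)⁻¹ := by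
        rw [inv_pow, inv_eq_iff_eq_inv, mul_inv, inv_inv, mul_add, inv_mul_cancel₀ hc0, mul_one,
          add_comm]
      have e2 := mul_inv_cancel₀ hc1
      rw [e, zero_pow (Nat.succ_ne_zero t)]
      simp only [pow_zero, zero_add, inv_one, mul_one]
      linear_combination e2 + h11
    · simp [hj0]

/-- Constructive part of the paper's Lemma 10: for `l ≥ 2`, `F = GF(2^(2l))`, `t = 2^l`,
`L₇ = {α : α^(t+1) ≠ 1}`, the binary Goppa code `Γ(L₇, X^(t+1) + 1)` has a codeword of
cardinality exactly `2t + 3`. -/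
theorem stmt_14 (l : ℕ) (hl : 2 ≤ l) (t : ℕ) (ht : t = 2 ^ l) :
    ∃ S : Finset (GaloisField 2 (2 * l)),
      (∀ α ∈ S, α ^ (t + 1) ≠ 1) ∧
      S.card = 2 * t + 3 ∧
      (∀ j < t + 1, ∑ α ∈ S, α ^ j * (α ^ (t + 1) + 1)⁻¹ = 0) := by
  classical
  have ht4 : 4 ≤ t := by
    rw [ht]
    calc 4 = 2 ^ 2 := by norm_num
      _ ≤ 2 ^ l := Nat.pow_le_pow_right (by norm_num) hl
  have hte : Even t := by
    rw [ht]
    exact (Nat.even_pow' (by omega)).2 even_two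
  obtain ⟨g, hg⟩ := IsCyclic.exists_generator (α := (GaloisField 2 (2 * l))ˣ)
  have hcard : Nat.card (GaloisField 2 (2 * l)) = t * t := by
    rw [GaloisField.card 2 (2 * l) (by omega), ht, two_mul, pow_add]
  have hord : orderOf g = (t - 1) * (t + 1) := by
    rw [orderOf_eq_card_of_forall_mem_zpowers hg, Nat.card_units, hcard]
    obtain ⟨s, rfl⟩ : ∃ s, t = s + 1 := ⟨t - 1, by omega⟩
    simp only [Nat.add_sub_cancel]
    rw [show (s + 1) * (s + 1) = s * (s + 1 + 1) + 1 by ring]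
    simp
  have hp : IsPrimitiveRoot (g : GaloisField 2 (2 * l)) ((t - 1) * (t + 1)) := by
    rw [IsPrimitiveRoot.coe_units_iff, ← hord]
    exact IsPrimitiveRoot.orderOf g
  have hpos : 0 < (t - 1) * (t + 1) := Nat.mul_pos (by omega) (by omega)
  refine aux_14 t hte _ (g : GaloisField 2 (2 * l)) (hp.pow hpos rfl) g.ne_zero ?_
  refine hp.pow_ne_one_of_pos_of_lt (by omega) ?_
  nlinarith [show 2 ≤ t - 1 by omega]
end

section
/- Let l ≥ 2, F = GF(2^{2l}), t = 2^l, and L₇ = {α ∈ F : α^{t+1} ≠ 1}. The minimum distance of the binary Goppa code Γ(L₇, X^{t+1} + 1) equals exactly its design distance 2(t+1) + 1 = 2t + 3: every nonempty codeword S satisfies |S| ≥ 2t + 3, and there exists a codeword of cardinality exactly 2t + 3. (Paper's Lemma 10.) -/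
open Finset

namespace Stmt15

open Polynomial

lemma dd_zero {F : Type*} [Field F] [CharP F 2] (f : F[X]) :
    derivative (derivative f) = 0 := by
  ext n
  simp only [coeff_derivative, coeff_zero]
  have h : (((n + 1 + 1) * (n + 1) : ℕ) : F) = 0 := by
    rw [CharP.cast_eq_zero_iff F 2]
    have := Nat.even_mul_succ_self (n + 1)
    rw [mul_comm]
    exact this.two_dvd
  push_cast at h ⊢
  rw [mul_assoc, h, mul_zero]

lemma deriv_sq {F : Type*} [Field F] [CharP F 2] [PerfectRing F 2] (f : F[X]) :
    ∃ h : F[X], derivative f = h ^ 2 := by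
  have h1 := polynomial_expand_eq (p := 2) (f := contract 2 (derivative f))
  rw [expand_contract 2 (dd_zero f) two_ne_zero] at h1
  exact ⟨_, h1⟩

lemma lower {F : Type*} [Field F] [CharP F 2] [PerfectRing F 2] (t : ℕ)
    (htt : ((t + 1 : ℕ) : F) ≠ 0) (S : Finset F)
    (hS : ∀ α ∈ S, α ^ (t + 1) ≠ 1)
    (hc : ∀ j < t + 1, ∑ α ∈ S, α ^ j * (α ^ (t + 1) + 1)⁻¹ = 0)
    (hne : S.Nonempty) : 2 * t + 3 ≤ S.card := by
  classical
  set f : F[X] := ∏ α ∈ S, (X - C α) with hf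
  set G : F[X] := X ^ (t + 1) - 1 with hG
  have hGsep : G.Separable := by
    have := separable_X_pow_sub_C (n := t + 1) (1 : F) htt one_ne_zero
    simpa [hG] using this
  have hGdeg : G.natDegree = t + 1 := by
    have := natDegree_X_pow_sub_C (n := t + 1) (r := (1 : F))
    simpa [hG] using this
  have hfsep : f.Separable := separable_prod_X_sub_C_iff'.2 (by
    intro x _ y _ h; exact h)
  have hfdeg : f.natDegree = S.card := by
    simp [hf]
  have hd : derivative f = ∑ α ∈ S, ∏ β ∈ S.erase α, (X - C β) := by
    rw [hf, derivative_prod_finset]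
    simp
  have hdvd : G ∣ derivative f := by
    have h0 : ∑ α ∈ S, C ((α ^ (t + 1) + 1)⁻¹) *
        (∑ i ∈ range (t + 1), X ^ i * (C α) ^ (t + 1 - 1 - i)) = 0 := by
      simp only [mul_sum]
      rw [sum_comm]
      apply sum_eq_zero
      intro i hi
      have := hc (t + 1 - 1 - i) (by omega)
      have h2 : X ^ i * C (∑ α ∈ S, α ^ (t + 1 - 1 - i) * (α ^ (t + 1) + 1)⁻¹) = 0 := by
        rw [this]; simp
      rw [← h2, map_sum, mul_sum]
      apply sum_congr rfl
      intro α _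
      rw [map_mul, map_pow]; ring
    have h1 := congrArg (· * f) h0
    simp only [zero_mul, sum_mul] at h1
    have h3 : ∀ α ∈ S, C ((α ^ (t + 1) + 1)⁻¹) *
        (∑ i ∈ range (t + 1), X ^ i * (C α) ^ (t + 1 - 1 - i)) * f =
        G * (C ((α ^ (t + 1) + 1)⁻¹) * ∏ β ∈ S.erase α, (X - C β)) -
          ∏ β ∈ S.erase α, (X - C β) := by
      intro α hα
      have hfa : f = (X - C α) * ∏ β ∈ S.erase α, (X - C β) := by
        rw [hf, mul_prod_erase S (fun β => X - C β) hα]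
      have hg := geom_sum₂_mul (X : F[X]) (C α) (t + 1)
      have hz : α ^ (t + 1) + 1 ≠ 0 := by
        intro h
        exact hS α hα (CharTwo.add_eq_zero.1 h)
      have hu : C ((α ^ (t + 1) + 1)⁻¹) * ((C α) ^ (t + 1) - 1) = (1 : F[X]) := by
        rw [CharTwo.sub_eq_add, ← C_pow, ← C_1, ← C_add, ← C_mul, inv_mul_cancel₀ hz]
      rw [hfa]
      calc _ = C ((α ^ (t + 1) + 1)⁻¹) *
        ((∑ i ∈ range (t + 1), X ^ i * (C α) ^ (t + 1 - 1 - i)) * (X - C α)) *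
          ∏ β ∈ S.erase α, (X - C β) := by ring
        _ = _ := by
          rw [hg, hG]
          linear_combination (-∏ β ∈ S.erase α, (X - C β)) * hu
    rw [sum_congr rfl h3, sum_sub_distrib, ← hd, ← mul_sum, sub_eq_zero] at h1
    exact ⟨_, h1.symm⟩
  obtain ⟨h, hh⟩ := deriv_sq f
  have hGh : G ∣ h := by
    rw [hh] at hdvd
    exact (hGsep.squarefree.dvd_pow_iff_dvd two_ne_zero).1 hdvd
  have hne0 : derivative f ≠ 0 := by
    intro h0
    have := hfsep
    rw [Polynomial.Separable, h0, isCoprime_zero_right] at this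
    have := natDegree_eq_zero_of_isUnit this
    rw [hfdeg] at this
    exact hne.card_ne_zero this
  have hG2 : G ^ 2 ∣ derivative f := by
    rw [hh]; exact pow_dvd_pow_of_dvd hGh 2
  have h4 := natDegree_le_of_dvd hG2 hne0
  rw [natDegree_pow, hGdeg] at h4
  have h5 := natDegree_derivative_lt (p := f) (by rw [hfdeg]; exact hne.card_ne_zero)
  omega

lemma upper {F : Type*} [Field F] [CharP F 2] (t : ℕ) (hodd : ((t + 1 : ℕ) : F) = 1)
    (ζ g : F) (hζ : IsPrimitiveRoot ζ (t + 1)) (hg0 : g ≠ 0)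
    (hg : g ^ (t + 1) ≠ 1) :
    ∃ S : Finset F, (∀ α ∈ S, α ^ (t + 1) ≠ 1) ∧
        (∀ j < t + 1, ∑ α ∈ S, α ^ j * (α ^ (t + 1) + 1)⁻¹ = 0) ∧
        S.card = 2 * t + 3 := by
  classical
  set T : F → Finset F := fun x => (range (t + 1)).image (fun i => x * ζ ^ i) with hT
  have hinj : ∀ x : F, x ≠ 0 → Set.InjOn (fun i => x * ζ ^ i) (range (t + 1) : Finset ℕ) := by
    intro x hx i hi k hk h
    have := mul_left_cancel₀ hx h
    exact hζ.pow_inj (by simpa using hi) (by simpa using hk) this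
  have hcard : ∀ x : F, x ≠ 0 → (T x).card = t + 1 := by
    intro x hx
    rw [hT]; simp only
    rw [card_image_of_injOn (hinj x hx), card_range]
  have hnorm : ∀ x : F, ∀ α ∈ T x, α ^ (t + 1) = x ^ (t + 1) := by
    intro x α hα
    simp only [hT, mem_image] at hα
    obtain ⟨i, _, rfl⟩ := hα
    rw [mul_pow, ← pow_mul, mul_comm i, pow_mul, hζ.pow_eq_one, one_pow, mul_one]
  have hsum : ∀ x : F, x ≠ 0 → ∀ j < t + 1,
      ∑ α ∈ T x, α ^ j * (α ^ (t + 1) + 1)⁻¹ =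
        if j = 0 then (x ^ (t + 1) + 1)⁻¹ else 0 := by
    intro x hx j hj
    rw [sum_congr rfl (fun α hα => by rw [hnorm x α hα]), ← sum_mul]
    split_ifs with h
    · subst h
      simp only [pow_zero, sum_const, hcard x hx, nsmul_eq_mul, hodd, one_mul]
    · have : ∑ α ∈ T x, α ^ j = 0 := by
        rw [hT]; simp only
        rw [sum_image (hinj x hx)]
        have h1 : ζ ^ j ≠ 1 := hζ.pow_ne_one_of_pos_of_lt h hj
        have h2 : ∑ i ∈ range (t + 1), (ζ ^ j) ^ i = 0 := by
          rw [geom_sum_eq h1, ← pow_mul, mul_comm, pow_mul, hζ.pow_eq_one]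
          simp
        calc _ = x ^ j * ∑ i ∈ range (t + 1), (ζ ^ j) ^ i := by
              rw [mul_sum]
              apply sum_congr rfl
              intro i _
              ring
          _ = 0 := by rw [h2, mul_zero]
      rw [this, zero_mul]
  set a := g ^ (t + 1) with ha
  have ha0 : a ≠ 0 := pow_ne_zero _ hg0
  have ha1 : a + 1 ≠ 0 := fun h => hg (CharTwo.add_eq_zero.1 h)
  have hb : (g⁻¹) ^ (t + 1) = a⁻¹ := by rw [inv_pow]
  have hab : a ≠ a⁻¹ := by
    intro h
    have h1 : a * a = 1 := by
      nth_rewrite 2 [h]; exact mul_inv_cancel₀ ha0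
    have h2 : (a + 1) ^ 2 = 0 := by
      rw [CharTwo.add_sq, sq, h1, one_pow, CharTwo.add_self_eq_zero]
    exact ha1 (pow_eq_zero_iff two_ne_zero |>.1 h2)
  have hgi : g⁻¹ ≠ 0 := inv_ne_zero hg0
  have hd1 : Disjoint (T g) (T g⁻¹) := by
    rw [disjoint_left]
    intro α h1 h2
    have := hnorm _ _ h1
    rw [hnorm _ _ h2, hb] at this
    exact hab this.symm
  have hd0 : (0 : F) ∉ T g ∪ T g⁻¹ := by
    intro h
    rw [mem_union] at h
    rcases h with h | h
    · have := hnorm _ _ h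
      rw [zero_pow (by omega)] at this
      exact ha0 this.symm
    · have := hnorm _ _ h
      rw [zero_pow (by omega), hb] at this
      exact inv_ne_zero ha0 this.symm
  refine ⟨insert 0 (T g ∪ T g⁻¹), ?_, ?_, ?_⟩
  · intro α hα
    rw [mem_insert, mem_union] at hα
    rcases hα with rfl | h | h
    · rw [zero_pow (by omega)]; exact zero_ne_one
    · rw [hnorm _ _ h]; exact hg
    · rw [hnorm _ _ h, hb]
      intro h; exact hg (inv_eq_one.1 h)
  · intro j hj
    rw [sum_insert hd0, sum_union hd1, hsum g hg0 j hj, hsum _ hgi j hj, hb, ← ha]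
    by_cases h : j = 0
    · subst h
      have h3 : a⁻¹ + 1 ≠ 0 := by
        intro h; exact hg (inv_eq_one.1 (CharTwo.add_eq_zero.1 h))
      have h4 : a⁻¹ + 1 = (a + 1) * a⁻¹ := by
        rw [add_mul, mul_inv_cancel₀ ha0]; ring
      have h5 : (a + 1)⁻¹ + (a⁻¹ + 1)⁻¹ = 1 := by
        rw [h4, mul_inv, inv_inv, ← mul_one_add, add_comm 1 a, inv_mul_cancel₀ ha1]
      simp only [if_true, h5]
      simp [CharTwo.add_self_eq_zero]
    · simp [h]
  · rw [card_insert_of_notMem hd0, card_union_of_disjoint hd1, hcard g hg0, hcard _ hgi]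
    ring

end Stmt15

/-- Paper's Lemma 10: for `l ≥ 2`, `F = GF(2^(2l))`, `t = 2^l`,
`L₇ = {α : α^(t+1) ≠ 1}`, the minimum distance of the binary Goppa code
`Γ(L₇, X^(t+1) + 1)` equals exactly its design distance `2(t+1) + 1 = 2t + 3`:
every nonempty codeword has cardinality at least `2t + 3`, and a codeword of
cardinality exactly `2t + 3` exists. -/
theorem stmt_15 (l : ℕ) (hl : 2 ≤ l) (t : ℕ) (ht : t = 2 ^ l) :
    (∀ S : Finset (GaloisField 2 (2 * l)),
        (∀ α ∈ S, α ^ (t + 1) ≠ 1) →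
        (∀ j < t + 1, ∑ α ∈ S, α ^ j * (α ^ (t + 1) + 1)⁻¹ = 0) →
        S.Nonempty → 2 * t + 3 ≤ S.card) ∧
    (∃ S : Finset (GaloisField 2 (2 * l)),
        (∀ α ∈ S, α ^ (t + 1) ≠ 1) ∧
        (∀ j < t + 1, ∑ α ∈ S, α ^ j * (α ^ (t + 1) + 1)⁻¹ = 0) ∧
        S.card = 2 * t + 3) := by
  haveI : CharP (GaloisField 2 (2 * l)) 2 := inferInstance
  haveI : Finite (GaloisField 2 (2 * l)) := inferInstance
  have hodd : ((t + 1 : ℕ) : GaloisField 2 (2 * l)) = 1 := by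
    have : ((t : ℕ) : GaloisField 2 (2 * l)) = 0 := by
      rw [CharP.cast_eq_zero_iff (GaloisField 2 (2 * l)) 2, ht]
      exact dvd_pow_self 2 (by omega)
    push_cast
    rw [this, zero_add]
  refine ⟨fun S h1 h2 h3 => Stmt15.lower t (by rw [hodd]; exact one_ne_zero) S h1 h2 h3, ?_⟩
  have h4 : 4 ≤ t := by
    rw [ht]; exact Nat.pow_le_pow_right (n := 2) (by norm_num) hl
  obtain ⟨u, hu⟩ := IsCyclic.exists_ofOrder_eq_natCard (α := (GaloisField 2 (2 * l))ˣ)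
  have hc : Nat.card (GaloisField 2 (2 * l))ˣ = (t + 1) * (t - 1) := by
    rw [Nat.card_units, GaloisField.card 2 (2 * l) (by omega), mul_comm 2 l, pow_mul, ← ht]
    simpa using Nat.sq_sub_sq t 1
  rw [hc] at hu
  have hprim : IsPrimitiveRoot (u : GaloisField 2 (2 * l)) ((t + 1) * (t - 1)) := by
    rw [← hu, IsPrimitiveRoot.coe_units_iff]
    exact IsPrimitiveRoot.orderOf u
  have hpos : 0 < (t + 1) * (t - 1) := Nat.mul_pos (by omega) (by omega)
  refine Stmt15.upper t hodd ((u : GaloisField 2 (2 * l)) ^ (t - 1)) u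
    (hprim.pow hpos (mul_comm _ _)) u.ne_zero ?_
  refine hprim.pow_ne_one_of_pos_of_lt (by omega) ?_
  exact lt_mul_of_one_lt_right (by omega) (by omega)
end

section
/- Let l ≥ 2, F = GF(2^{2l}), t = 2^l, and L₅ = {α ∈ F : α ≠ 0 and α^t + α^{t−1} + 1 ≠ 0}. The minimum distance of the binary Goppa code Γ(L₅, X^{t+1} + X^t + X) equals exactly its design distance 2(t+1) + 1 = 2t + 3: every nonempty codeword S satisfies |S| ≥ 2t + 3, and there exists a codeword of cardinality exactly 2t + 3. (Paper's Corollary 4, for the code Γ(L₅,G₅) equivalent to Γ(L₇, X^{t+1}+1) via the translation x ↦ x + 1.) -/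
open Finset

section aux
open Polynomial

variable {F : Type*} [Field F] [CharP F 2]

lemma aux_G (l t : ℕ) (ht : t = 2 ^ l) (x : F) :
    x ^ (t + 1) + x ^ t + x = (x + 1) ^ (t + 1) + 1 := by
  have h : (x + 1) ^ t = x ^ t + 1 := by
    subst ht
    rw [add_pow_char_pow]; simp
  have h2 : (1 : F) + 1 = 0 := CharTwo.add_self_eq_zero 1
  rw [pow_succ (x + 1), h]
  linear_combination -h2

lemma aux_fac (t : ℕ) (ht : 1 ≤ t) (x : F) :
    x ^ (t + 1) + x ^ t + x = x * (x ^ t + x ^ (t - 1) + 1) := by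
  obtain ⟨k, rfl⟩ : ∃ k, t = k + 1 := ⟨t - 1, by omega⟩
  simp only [Nat.add_sub_cancel]
  ring

lemma aux_inv (t : ℕ) (ht : 1 ≤ t) (S : Finset F)
    (hG : ∀ α ∈ S, α ^ (t + 1) + α ^ t + α ≠ 0)
    (hS : ∀ j < t + 1, ∑ α ∈ S, α ^ j * (α ^ (t + 1) + α ^ t + α)⁻¹ = 0)
    (γ : F) (hγ : γ ^ (t + 1) + γ ^ t + γ = 0) : ∑ α ∈ S, (γ - α)⁻¹ = 0 := by
  set G : F[X] := X ^ (t + 1) + X ^ t + X with hGdef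
  have hdeg : G.natDegree ≤ t + 1 := by
    rw [hGdef]; compute_degree
  have hroot : G.IsRoot γ := by simp [hGdef, hγ]
  have hfac := mul_divByMonic_eq_iff_isRoot.2 hroot
  set Q := G /ₘ (X - C γ) with hQ
  have hQd : Q.natDegree < t + 1 := by
    rw [hQ, natDegree_divByMonic _ (monic_X_sub_C γ), natDegree_X_sub_C]; omega
  have key : ∀ α ∈ S, (γ - α)⁻¹ =
      - ∑ j ∈ range (t + 1), Q.coeff j * (α ^ j * (α ^ (t + 1) + α ^ t + α)⁻¹) := by
    intro α hα
    have h1 : (α - γ) * Q.eval α = α ^ (t + 1) + α ^ t + α := by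
      have := congrArg (eval α) hfac
      simpa [hGdef] using this
    have h2 := hG α hα
    rw [← h1] at h2
    have h3 := left_ne_zero_of_mul h2
    have h4 := right_ne_zero_of_mul h2
    have h5 : ∑ j ∈ range (t + 1), Q.coeff j * (α ^ j * (α ^ (t + 1) + α ^ t + α)⁻¹)
        = Q.eval α * (α ^ (t + 1) + α ^ t + α)⁻¹ := by
      rw [eval_eq_sum_range' hQd, Finset.sum_mul]
      exact Finset.sum_congr rfl fun _ _ => by ring
    rw [h5, ← h1, mul_inv, mul_comm (α - γ)⁻¹, mul_inv_cancel_left₀ h4, ← neg_sub α γ, inv_neg]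
  rw [Finset.sum_congr rfl key, Finset.sum_neg_distrib, Finset.sum_comm]
  simp only [← Finset.mul_sum]
  rw [Finset.sum_eq_zero, neg_zero]
  intro j hj
  rw [hS j (Finset.mem_range.1 hj), mul_zero]

lemma aux_lower (t : ℕ) (ht : 1 ≤ t) (S : Finset F)
    (hG : ∀ α ∈ S, α ^ (t + 1) + α ^ t + α ≠ 0)
    (hS : ∀ j < t + 1, ∑ α ∈ S, α ^ j * (α ^ (t + 1) + α ^ t + α)⁻¹ = 0)
    (hne : S.Nonempty)
    (Γ : Finset F) (hΓ : ∀ γ ∈ Γ, γ ^ (t + 1) + γ ^ t + γ = 0) (hc : Γ.card = t + 1) :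
    2 * t + 3 ≤ S.card := by
  classical
  set σ : F[X] := ∏ α ∈ S, (X - C α) with hσ
  have hder : derivative σ = ∑ α ∈ S, ∏ β ∈ S.erase α, (X - C β) := by
    rw [hσ, derivative_prod_finset]
    simp
  have hd0 : derivative σ ≠ 0 := by
    obtain ⟨a, ha⟩ := hne
    intro h0
    have h1 := congrArg (eval a) (hder.symm.trans h0)
    rw [eval_finset_sum, eval_zero, Finset.sum_eq_single a] at h1
    · rw [eval_prod, Finset.prod_eq_zero_iff] at h1
      obtain ⟨b, hb, hb'⟩ := h1
      simp only [eval_sub, eval_X, eval_C, sub_eq_zero] at hb'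
      exact (Finset.mem_erase.1 hb).1 hb'.symm
    · intro b hb hba
      rw [eval_prod]
      exact Finset.prod_eq_zero (Finset.mem_erase.2 ⟨hba.symm, ha⟩) (by simp)
    · intro h; exact absurd ha h
  have hdd : derivative (derivative σ) = 0 := by
    ext n
    rw [coeff_derivative, coeff_derivative]
    have h2 : (2 : F) = 0 := CharTwo.two_eq_zero
    obtain ⟨k, rfl | rfl⟩ := Nat.even_or_odd' n
    · push_cast
      rw [coeff_zero]
      linear_combination (σ.coeff (2 * k + 1 + 1) * (k + 1) * (2 * k + 1)) * h2
    · push_cast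
      rw [coeff_zero]
      linear_combination (σ.coeff (2 * k + 1 + 1 + 1) * (2 * k + 1 + 1 + 1) * (k + 1)) * h2
  have hroot : ∀ γ ∈ Γ, (derivative σ).IsRoot γ := by
    intro γ hγ
    have hne' : ∀ α ∈ S, γ - α ≠ 0 := by
      intro α hα h
      rw [sub_eq_zero] at h
      exact hG α hα (h ▸ hΓ γ hγ)
    have h1 := aux_inv t ht S hG hS γ (hΓ γ hγ)
    rw [IsRoot, hder, eval_finset_sum]
    have : ∀ α ∈ S, eval γ (∏ β ∈ S.erase α, (X - C β)) =
        (∏ β ∈ S, (γ - β)) * (γ - α)⁻¹ := by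
      intro α hα
      rw [← Finset.mul_prod_erase S _ hα, eval_prod]
      simp only [eval_sub, eval_X, eval_C]
      field_simp [hne' α hα]
    rw [Finset.sum_congr rfl this, ← Finset.mul_sum, h1, mul_zero]
  have hle : 2 • Γ.val ≤ (derivative σ).roots := by
    rw [Multiset.le_iff_count]
    intro a
    rw [Multiset.count_nsmul, count_roots]
    by_cases ha : a ∈ Γ
    · have h1 : Multiset.count a Γ.val ≤ 1 := Multiset.nodup_iff_count_le_one.1 Γ.nodup a
      have h2 := (one_lt_rootMultiplicity_iff_isRoot hd0).2
        ⟨hroot a ha, by rw [hdd]; simp [IsRoot]⟩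
      omega
    · rw [Multiset.count_eq_zero_of_notMem (by simpa using ha)]; simp
  have h1 := Multiset.card_le_card hle
  rw [Multiset.card_nsmul, Finset.card_val, hc] at h1
  have h2 := card_roots' (derivative σ)
  have h4 : σ.natDegree = S.card := by
    rw [hσ, natDegree_prod_of_monic _ _ fun a _ => monic_X_sub_C a]; simp
  have h3 : (derivative σ).natDegree < σ.natDegree := by
    apply natDegree_derivative_lt
    rw [h4]
    exact (Finset.card_pos.2 hne).ne'
  omega

lemma aux_geom (n : ℕ) (ω : F) (hω : IsPrimitiveRoot ω n) (i : ℕ) (hi : 0 < i) (hin : i < n) :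
    ∑ k ∈ range n, (ω ^ k) ^ i = 0 := by
  have h1 : ω ^ i ≠ 1 := hω.pow_ne_one_of_pos_of_lt hi.ne' hin
  have h2 := geom_sum_mul (ω ^ i) n
  rw [← pow_mul, mul_comm i n, pow_mul, hω.pow_eq_one, one_pow, sub_self] at h2
  have h3 := (mul_eq_zero.1 h2).resolve_right (sub_ne_zero.2 h1)
  rw [← h3]
  exact Finset.sum_congr rfl fun k _ => by rw [← pow_mul, ← pow_mul, mul_comm]

lemma aux_sum (t : ℕ) (ht0 : (t : F) = 0) (ω : F) (hω : IsPrimitiveRoot ω (t + 1)) (w : F)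
    (j : ℕ) (hj : j < t + 1) :
    ∑ k ∈ range (t + 1), (w * ω ^ k + 1) ^ j = 1 := by
  simp only [add_pow, one_pow, mul_one, mul_pow]
  rw [Finset.sum_comm, Finset.sum_eq_single 0]
  · simp [ht0]
  · intro i hi hi0
    have := aux_geom (t + 1) ω hω i (by omega) (by have := Finset.mem_range.1 hi; omega)
    rw [← Finset.sum_mul, ← Finset.mul_sum, this]; simp
  · simp

lemma aux_upper (l t : ℕ) (hl : 1 ≤ l) (ht : t = 2 ^ l) (ω : F)
    (hω : IsPrimitiveRoot ω (t + 1)) (w : F)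
    (hw : w ≠ 0) (hr : w ^ (t + 1) ≠ 1) :
    ∃ S : Finset F, (∀ α ∈ S, α ^ (t + 1) + α ^ t + α ≠ 0) ∧
        (∀ j < t + 1, ∑ α ∈ S, α ^ j * (α ^ (t + 1) + α ^ t + α)⁻¹ = 0) ∧
        S.card = 2 * t + 3 := by
  classical
  have ht0 : (t : F) = 0 := by
    rw [ht]; push_cast
    rw [CharTwo.two_eq_zero, zero_pow (by omega)]
  have h11 : (1 : F) + 1 = 0 := CharTwo.add_self_eq_zero 1
  have add1 : ∀ x : F, x + 1 = 0 → x = 1 := fun x hx => by linear_combination hx - h11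
  have hN : ∀ (v : F) (k : ℕ), (v * ω ^ k) ^ (t + 1) = v ^ (t + 1) := by
    intro v k
    rw [mul_pow, ← pow_mul, mul_comm k, pow_mul, hω.pow_eq_one, one_pow, mul_one]
  have hGv : ∀ (v : F) (k : ℕ), (v * ω ^ k + 1) ^ (t + 1) + (v * ω ^ k + 1) ^ t + (v * ω ^ k + 1)
      = v ^ (t + 1) + 1 := by
    intro v k
    rw [aux_G l t ht, add_assoc _ 1 1, h11, add_zero, hN]
  have hinj : ∀ v : F, v ≠ 0 → Set.InjOn (fun k => v * ω ^ k + 1) (range (t + 1)) := by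
    intro v hv a ha b hb hab
    simp only [add_left_inj, mul_right_inj' hv] at hab
    exact hω.pow_inj (by simpa using ha) (by simpa using hb) hab
  set A : F → Finset F := fun v => (range (t + 1)).image fun k => v * ω ^ k + 1 with hA
  have hAc : ∀ v, v ≠ 0 → (A v).card = t + 1 := fun v hv => by
    rw [hA, Finset.card_image_of_injOn (hinj v hv), card_range]
  have hAG : ∀ v, ∀ α ∈ A v, α ^ (t + 1) + α ^ t + α = v ^ (t + 1) + 1 := by
    intro v α hα
    obtain ⟨k, _, rfl⟩ := Finset.mem_image.1 hα
    exact hGv v k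
  have hAs : ∀ v, v ≠ 0 → ∀ j < t + 1,
      ∑ α ∈ A v, α ^ j * (α ^ (t + 1) + α ^ t + α)⁻¹ = (v ^ (t + 1) + 1)⁻¹ := by
    intro v hv j hj
    rw [Finset.sum_congr rfl fun α hα => by rw [hAG v α hα], ← Finset.sum_mul, hA,
      Finset.sum_image (hinj v hv), aux_sum t ht0 ω hω v j hj, one_mul]
  have hG1 : (1 : F) ^ (t + 1) + 1 ^ t + 1 = 1 := by simp [h11]
  set r := w ^ (t + 1) with hrdef
  have hr0 : r ≠ 0 := pow_ne_zero _ hw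
  have hr1 : r + 1 ≠ 0 := fun h => hr (add1 _ h)
  have hwi : w⁻¹ ≠ 0 := inv_ne_zero hw
  have hri : w⁻¹ ^ (t + 1) = r⁻¹ := by rw [inv_pow]
  have hri1 : r⁻¹ + 1 ≠ 0 := fun h => hr (inv_eq_one.1 (add1 _ h))
  have hd : Disjoint (A w) (A w⁻¹) := by
    rw [Finset.disjoint_left]
    intro a ha hb
    have h1 := (hAG _ _ ha).symm.trans (hAG _ _ hb)
    rw [hri, add_left_inj] at h1
    have h2 : r * r = 1 := by
      nth_rewrite 2 [hrdef]
      rw [h1]; exact mul_inv_cancel₀ hr0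
    have h3 : (r + 1) * (r + 1) = 0 := by linear_combination h2 + (r + 1) * h11
    exact hr1 (mul_self_eq_zero.1 h3)
  have h1n : (1 : F) ∉ A w ∪ A w⁻¹ := by
    intro h
    rcases Finset.mem_union.1 h with h | h
    · have := (hAG _ _ h).symm.trans hG1
      rw [add_eq_right] at this
      exact hr0 this
    · have := (hAG _ _ h).symm.trans hG1
      rw [hri, add_eq_right] at this
      exact inv_ne_zero hr0 this
  refine ⟨insert 1 (A w ∪ A w⁻¹), ?_, ?_, ?_⟩
  · intro α hα
    rcases Finset.mem_insert.1 hα with rfl | hα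
    · rw [hG1]; exact one_ne_zero
    rcases Finset.mem_union.1 hα with h | h
    · rw [hAG _ _ h]; exact hr1
    · rw [hAG _ _ h, hri]; exact hri1
  · intro j hj
    rw [Finset.sum_insert h1n, Finset.sum_union hd, hAs _ hw j hj, hAs _ hwi j hj, hG1, hri,
      ← hrdef]
    have : r⁻¹ + 1 = (r + 1) * r⁻¹ := by field_simp; ring
    rw [this, mul_inv, inv_inv, one_pow, inv_one, mul_one]
    field_simp
    linear_combination (r + 1) * h11
  · rw [Finset.card_insert_of_notMem h1n, Finset.card_union_of_disjoint hd, hAc _ hw, hAc _ hwi]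
    ring

end aux

/-- Paper's Corollary 4 for `Γ(L₅, G₅)`: for `l ≥ 2`, `F = GF(2^(2l))`, `t = 2^l`,
`L₅ = {α : α ≠ 0 ∧ α^t + α^(t-1) + 1 ≠ 0}`, the minimum distance of the binary
Goppa code `Γ(L₅, X^(t+1) + X^t + X)` equals exactly its design distance
`2(t+1) + 1 = 2t + 3`. -/
theorem stmt_16 (l : ℕ) (hl : 2 ≤ l) (t : ℕ) (ht : t = 2 ^ l) :
    (∀ S : Finset (GaloisField 2 (2 * l)),
        (∀ α ∈ S, α ≠ 0 ∧ α ^ t + α ^ (t - 1) + 1 ≠ 0) →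
        (∀ j < t + 1, ∑ α ∈ S, α ^ j * (α ^ (t + 1) + α ^ t + α)⁻¹ = 0) →
        S.Nonempty → 2 * t + 3 ≤ S.card) ∧
    (∃ S : Finset (GaloisField 2 (2 * l)),
        (∀ α ∈ S, α ≠ 0 ∧ α ^ t + α ^ (t - 1) + 1 ≠ 0) ∧
        (∀ j < t + 1, ∑ α ∈ S, α ^ j * (α ^ (t + 1) + α ^ t + α)⁻¹ = 0) ∧
        S.card = 2 * t + 3) := by
  classical
  have ht4 : 4 ≤ t := by
    rw [ht]; calc 4 = 2 ^ 2 := rfl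
      _ ≤ 2 ^ l := Nat.pow_le_pow_right (by norm_num) hl
  have : Fintype (GaloisField 2 (2 * l)) := Fintype.ofFinite _
  have hcard : Nat.card (GaloisField 2 (2 * l)) = t * t := by
    rw [GaloisField.card 2 (2 * l) (by omega), ht, ← pow_add, two_mul]
  obtain ⟨g, hg⟩ := IsCyclic.exists_generator (α := (GaloisField 2 (2 * l))ˣ)
  have hog : orderOf g = (t + 1) * (t - 1) := by
    rw [orderOf_eq_card_of_forall_mem_zpowers hg, Nat.card_units, hcard]
    obtain ⟨k, rfl⟩ : ∃ k, t = k + 1 := ⟨t - 1, by omega⟩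
    simp only [Nat.add_sub_cancel]
    rw [Nat.sub_eq_iff_eq_add (by nlinarith)]; ring
  have hprim : IsPrimitiveRoot (g : GaloisField 2 (2 * l)) ((t + 1) * (t - 1)) := by
    rw [← hog]; exact IsPrimitiveRoot.coe_units_iff.2 (IsPrimitiveRoot.orderOf g)
  have hpos : 0 < (t + 1) * (t - 1) := Nat.mul_pos (by omega) (by omega)
  have hω : IsPrimitiveRoot ((g : GaloisField 2 (2 * l)) ^ (t - 1)) (t + 1) :=
    hprim.pow hpos (mul_comm _ _)
  have hr : (g : GaloisField 2 (2 * l)) ^ (t + 1) ≠ 1 := by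
    have h := hprim.pow hpos (a := t + 1) (b := t - 1) rfl
    exact h.ne_one (by omega)
  have hGiff : ∀ α : GaloisField 2 (2 * l), (α ≠ 0 ∧ α ^ t + α ^ (t - 1) + 1 ≠ 0) ↔
      α ^ (t + 1) + α ^ t + α ≠ 0 := by
    intro α
    rw [aux_fac t (by omega), mul_ne_zero_iff]
  simp only [hGiff]
  refine ⟨?_, aux_upper l t (by omega) ht _ hω _ g.ne_zero hr⟩
  intro S hS hj hne
  set ω := (g : GaloisField 2 (2 * l)) ^ (t - 1) with hωdef
  refine aux_lower t (by omega) S hS hj hne ((range (t + 1)).image fun k => ω ^ k + 1) ?_ ?_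
  · intro γ hγ
    obtain ⟨k, _, rfl⟩ := Finset.mem_image.1 hγ
    have h11 : (1 : GaloisField 2 (2 * l)) + 1 = 0 := CharTwo.add_self_eq_zero 1
    rw [aux_G l t ht, add_assoc _ 1 1, h11, add_zero, ← pow_mul, mul_comm k, pow_mul,
      hω.pow_eq_one, one_pow, h11]
  · rw [Finset.card_image_of_injOn, card_range]
    intro a ha b hb hab
    simp only [add_left_inj] at hab
    exact hω.pow_inj (by simpa using ha) (by simpa using hb) hab
end

section
/- Let l ≥ 2, F = GF(2^{2l}), t = 2^l, and L₂ = {α ∈ F : α^t ≠ α}. Then every codeword of the binary Goppa code Γ(L₂, X^t + X) has even cardinality, and every nonempty codeword S satisfies |S| ≥ 2(t+1) + 2 = 2t + 4. (Paper's Lemma 11: the minimal distance of Γ(L₂,G₂) ≡ Γ(L₃,G₃) equals the minimal even weight of a codeword of Γ(L₅,G₅) ≡ Γ(L₆,G₆) ≡ Γ(L₇,G₇), hence d ≥ 2(t+1)+2.) -/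
open Finset

section aux
open Polynomial

lemma aux_roots (l : ℕ) (hl : 2 ≤ l) :
    ∃ B : Finset (GaloisField 2 (2 * l)), B.card = 2 ^ l ∧ ∀ b ∈ B, b ^ (2 ^ l) = b := by
  classical
  set F := GaloisField 2 (2 * l)
  have : Fintype F := Fintype.ofFinite F
  have hcard : Fintype.card F = 2 ^ (2 * l) := by
    rw [← Nat.card_eq_fintype_card]; exact GaloisField.card 2 (2 * l) (by omega)
  have h1 : 1 < 2 ^ l := Nat.one_lt_two_pow (by omega)
  have hsep : (X ^ (2 ^ l) - X : F[X]).Separable := galois_poly_separable 2 (2 ^ l) (dvd_pow_self 2 (by omega))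
  have hdvd : (X ^ (2 ^ l) - X : F[X]) ∣ X ^ Fintype.card F - X := by
    have : (X ^ Fintype.card F - X : F[X]) =
        (X ^ (2 ^ l) - X) ^ (2 ^ l) + (X ^ (2 ^ l) - X) := by
      have e : 2 ^ (2 * l) = 2 ^ l * 2 ^ l := by ring
      rw [sub_pow_char_pow, hcard, ← pow_mul, e]; ring
    rw [this]
    exact dvd_add (dvd_pow_self _ (by omega)) dvd_rfl
  have hne : (X ^ Fintype.card F - X : F[X]) ≠ 0 :=
    FiniteField.X_pow_card_sub_X_ne_zero F (Fintype.one_lt_card)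
  have hs : (X ^ Fintype.card F - X : F[X]).Splits := by
    rw [splits_iff_card_roots, FiniteField.roots_X_pow_card_sub_X,
      FiniteField.X_pow_card_sub_X_natDegree_eq F Fintype.one_lt_card]
    simp
  have hs2 := hs.of_dvd hne hdvd
  have hc := splits_iff_card_roots.1 hs2
  rw [FiniteField.X_pow_card_sub_X_natDegree_eq F h1] at hc
  refine ⟨(X ^ (2 ^ l) - X : F[X]).roots.toFinset, ?_, ?_⟩
  · rw [Multiset.toFinset_card_of_nodup (nodup_roots hsep), hc]
  · intro b hb
    rw [Multiset.mem_toFinset, mem_roots (ne_zero_of_dvd_ne_zero hne hdvd)] at hb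
    simpa [sub_eq_zero] using hb

lemma aux_poly {F : Type*} [Field F] [CharP F 2] (t : ℕ) (S B : Finset F) (hB : B.card = t)
    (hn : S.Nonempty) (heven : Even S.card) (hsum : ∑ a ∈ S, a = 0)
    (hBS : ∀ b ∈ B, b ∉ S)
    (hinv : ∀ b ∈ B, ∑ a ∈ S, (b - a)⁻¹ = 0) : 2 * t + 4 ≤ S.card := by
  classical
  set P : F[X] := ∏ a ∈ S, (X - C a) with hP
  have hdeg : P.natDegree = S.card := by exact natDegree_finsetProd_X_sub_C_eq_card S (fun a => a)
  have hder : ∀ x, (derivative P).eval x = ∑ a ∈ S, ∏ c ∈ S.erase a, (x - c) := by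
    intro x
    rw [hP, derivative_prod_finset]
    simp [eval_finset_sum, eval_prod]
  have hne : derivative P ≠ 0 := by
    obtain ⟨a, ha⟩ := hn
    intro h
    have h2 := hder a
    rw [h, eval_zero, Finset.sum_eq_single a] at h2
    · symm at h2
      rw [Finset.prod_eq_zero_iff] at h2
      obtain ⟨c, hc, hc2⟩ := h2
      exact (Finset.mem_erase.1 hc).1 (sub_eq_zero.1 hc2).symm
    · intro b hb hba
      exact Finset.prod_eq_zero (Finset.mem_erase.2 ⟨hba.symm, ha⟩) (sub_self a)
    · exact fun h => absurd ha h
  have hroot : ∀ b ∈ B, (derivative P).IsRoot b := by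
    intro b hb
    rw [IsRoot, hder]
    have : ∀ a ∈ S, ∏ c ∈ S.erase a, (b - c) = (∏ c ∈ S, (b - c)) * (b - a)⁻¹ := by
      intro a ha
      have hba : b - a ≠ 0 := sub_ne_zero.2 (fun h => hBS b hb (h ▸ ha))
      rw [← Finset.mul_prod_erase S _ ha]
      field_simp
    rw [Finset.sum_congr rfl this, ← Finset.mul_sum, hinv b hb, mul_zero]
  have h2 : (2 : F) = 0 := CharTwo.two_eq_zero
  have hdd : derivative (derivative P) = 0 := by
    ext k
    rw [coeff_derivative, coeff_derivative, coeff_zero]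
    have : Even ((k + 1) * (k + 2)) := Nat.even_mul_succ_self (k + 1)
    obtain ⟨m, hm⟩ := this
    have hm' : ((k : F) + 1) * (k + 2) = m + m := by exact_mod_cast congrArg (Nat.cast : ℕ → F) hm
    push_cast
    linear_combination (P.coeff (k + 1 + 1)) * hm' + P.coeff (k + 1 + 1) * (m : F) * h2
  have hle : 2 • B.val ≤ (derivative P).roots := by
    rw [Multiset.le_iff_count]
    intro b
    rw [Multiset.count_nsmul, count_roots]
    by_cases hb : b ∈ B
    · rw [Multiset.count_eq_one_of_mem B.nodup hb]
      have := (one_lt_rootMultiplicity_iff_isRoot hne).2 ⟨hroot b hb, by rw [hdd]; simp [IsRoot]⟩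
      omega
    · rw [Multiset.count_eq_zero_of_notMem (by simpa using hb)]; simp
  have hc := (Multiset.card_le_card hle).trans (card_roots' _)
  have hc' : 2 * t ≤ (derivative P).natDegree := by
    simpa [hB] using hc
  by_contra hcon
  set N := (derivative P).natDegree with hN
  have hlc : (derivative P).coeff N ≠ 0 := by
    rw [hN]; exact leadingCoeff_ne_zero.2 hne
  apply hlc
  rw [coeff_derivative]
  have hcase : S.card < N + 1 ∨ Even (N + 1) ∨ N + 1 = S.card - 1 := by
    obtain ⟨m, hm⟩ := heven
    by_cases h : S.card < N + 1
    · exact Or.inl h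
    · have : N + 1 = S.card ∨ N + 1 = S.card - 1 ∨ N + 1 = S.card - 2 := by omega
      rcases this with h | h | h
      · exact Or.inr (Or.inl ⟨m, by omega⟩)
      · exact Or.inr (Or.inr h)
      · exact Or.inr (Or.inl ⟨m - 1, by omega⟩)
  rcases hcase with h | ⟨m, h⟩ | h
  · rw [coeff_eq_zero_of_natDegree_lt (by omega), zero_mul]
  · have : (N : F) + 1 = m + m := by exact_mod_cast congrArg (Nat.cast : ℕ → F) h
    rw [this]; linear_combination P.coeff (N + 1) * (m : F) * h2
  · have := prod_X_sub_C_coeff_card_pred S (fun a => a) (Finset.card_pos.2 hn)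
    rw [h, hP, this, hsum]; simp

end aux

/-- Paper's Lemma 11: for `l ≥ 2`, `F = GF(2^(2l))`, `t = 2^l`,
`L₂ = {α : α^t ≠ α}`, every codeword of the binary Goppa code `Γ(L₂, X^t + X)` has
even cardinality, and every nonempty codeword has cardinality at least
`2(t+1) + 2 = 2t + 4`. -/
theorem stmt_17 (l : ℕ) (hl : 2 ≤ l) (t : ℕ) (ht : t = 2 ^ l)
    (S : Finset (GaloisField 2 (2 * l)))
    (hS : ∀ α ∈ S, α ^ t ≠ α)
    (hcw : ∀ j < t, ∑ α ∈ S, α ^ j * (α ^ t + α)⁻¹ = 0) :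
    Even S.card ∧ (S.Nonempty → 2 * t + 4 ≤ S.card) := by
  classical
  have h2 : (2 : GaloisField 2 (2 * l)) = 0 := CharTwo.two_eq_zero
  have ht4 : 4 ≤ t := by
    rw [ht]; exact Nat.pow_le_pow_right (n := 2) (by norm_num) hl
  have hG : ∀ α ∈ S, α ^ t + α ≠ 0 := by
    intro α ha h
    exact hS α ha (CharTwo.add_eq_zero.1 h)
  have hfr : ∀ α : GaloisField 2 (2 * l), (α ^ t) ^ t = α := by
    intro α
    have : Fintype (GaloisField 2 (2 * l)) := Fintype.ofFinite _
    have hcard : Fintype.card (GaloisField 2 (2 * l)) = 2 ^ (2 * l) := by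
      rw [← Nat.card_eq_fintype_card]; exact GaloisField.card 2 (2 * l) (by omega)
    have h := FiniteField.pow_card α
    have e : 2 ^ (2 * l) = t * t := by rw [ht]; ring
    rw [hcard, e, pow_mul] at h
    exact h
  have haddt : ∀ x y : GaloisField 2 (2 * l), (x + y) ^ t = x ^ t + y ^ t := by
    intro x y; rw [ht]; exact add_pow_char_pow x y 2 l
  have hGt : ∀ α : GaloisField 2 (2 * l), (α ^ t + α) ^ t = α ^ t + α := by
    intro α; rw [haddt, hfr, add_comm]
  have hsumt : ∀ f : GaloisField 2 (2 * l) → GaloisField 2 (2 * l),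
      (∑ α ∈ S, f α) ^ t = ∑ α ∈ S, f α ^ t := by
    intro f; rw [ht]; exact sum_pow_char_pow 2 l S f
  have hconj : ∀ j < t, ∑ α ∈ S, (α ^ t) ^ j * (α ^ t + α)⁻¹ = 0 := by
    intro j hj
    have h := congrArg (· ^ t) (hcw j hj)
    simp only [hsumt] at h
    rw [zero_pow (by omega)] at h
    rw [← h]
    refine Finset.sum_congr rfl fun α _ => ?_
    rw [mul_pow, inv_pow, hGt, ← pow_mul, ← pow_mul, mul_comm t j]
  have heven : Even S.card := by
    have h0 : ∑ α ∈ S, (1 : GaloisField 2 (2 * l)) = 0 := by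
      have h := congrArg₂ (· + ·) (hconj 1 (by omega)) (hcw 1 (by omega))
      simp only [← Finset.sum_add_distrib, add_zero] at h
      rw [← h]
      refine Finset.sum_congr rfl fun α ha => ?_
      have := hG α ha
      field_simp
    rw [Finset.sum_const, nsmul_eq_mul, mul_one, CharP.cast_eq_zero_iff _ 2] at h0
    exact even_iff_two_dvd.2 h0
  refine ⟨heven, fun hn => ?_⟩
  obtain ⟨B, hBc, hB⟩ := aux_roots l hl
  rw [← ht] at hBc hB
  refine aux_poly t S B hBc hn heven ?_ ?_ ?_
  · obtain ⟨m, hm⟩ : ∃ m, t = 2 * m := ⟨2 ^ (l - 1), by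
      rw [ht, ← pow_succ']; congr 1; omega⟩
    have ha := hcw (m + 1) (by omega)
    have hb := hconj (m + 1) (by omega)
    have ha2 := congrArg (· ^ 2) ha
    have hb2 := congrArg (· ^ 2) hb
    simp only [CharTwo.sum_sq] at ha2 hb2
    have hc := hcw 2 (by omega)
    have h := congrArg₂ (· + ·) (congrArg₂ (· + ·) ha2 hb2) hc
    simp only [← Finset.sum_add_distrib] at h
    have h00 : (0 : GaloisField 2 (2 * l)) ^ 2 + 0 ^ 2 + 0 = 0 := by ring
    rw [h00] at h
    rw [← h]
    refine Finset.sum_congr rfl fun α hα => ?_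
    have hg := hG α hα
    have e1 : (α ^ (m + 1)) ^ 2 = α ^ t * α ^ 2 := by rw [hm]; ring
    have e2 : ((α ^ t) ^ (m + 1)) ^ 2 = α * (α ^ t) ^ 2 := by
      have : ((α ^ t) ^ (m + 1)) ^ 2 = (α ^ t) ^ (2 * m) * (α ^ t) ^ 2 := by ring
      rw [this, ← hm, hfr]
    rw [mul_pow, mul_pow, e1, e2]
    generalize α ^ t = β at hg
    field_simp
    ring
  · intro b hb hbS
    exact hS b hbS (hB b hb)
  · intro b hb
    have key : ∑ α ∈ S, ((α - b) ^ (t - 1) + 1) * (α ^ t + α)⁻¹ = 0 := by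
      have h1 : ∀ Q : Polynomial (GaloisField 2 (2 * l)), Q.natDegree < t →
          ∑ α ∈ S, Q.eval α * (α ^ t + α)⁻¹ = 0 := by
        intro Q hQ
        simp only [Polynomial.eval_eq_sum_range' hQ, Finset.sum_mul]
        rw [Finset.sum_comm]
        refine Finset.sum_eq_zero fun j hj => ?_
        simp only [mul_assoc]
        rw [← Finset.mul_sum, hcw j (Finset.mem_range.1 hj), mul_zero]
      have h3 := h1 ((Polynomial.X - Polynomial.C b) ^ (t - 1) + Polynomial.C 1) (by
        rw [Polynomial.natDegree_add_C, Polynomial.natDegree_pow, Polynomial.natDegree_X_sub_C]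
        omega)
      simpa using h3
    rw [← key]
    refine Finset.sum_congr rfl fun α hα => ?_
    have hg := hG α hα
    have hab : α - b ≠ 0 := by
      intro h
      rw [sub_eq_zero] at h
      exact hS α hα (h ▸ hB b hb)
    have e : (α - b) * ((α - b) ^ (t - 1) + 1) = α ^ t + α := by
      have e0 : (α - b) * (α - b) ^ (t - 1) = (α - b) ^ t := mul_pow_sub_one (by omega) _
      rw [mul_add, e0, CharTwo.sub_eq_add, haddt, hB b hb]
      linear_combination b * h2
    have e3 : (b - α) = α - b := by linear_combination (b - α) * h2
    rw [e3, ← e]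
    rw [← e] at hg
    have := right_ne_zero_of_mul hg
    field_simp
end

section
/- Let l ≥ 2, F = GF(2^{2l}), t = 2^l, and L₄ = {α ∈ F : α^t + α^{t−1} + 1 ≠ 0}. The minimum distance of the binary Goppa code Γ(L₄, X^t + X^{t−1} + 1) equals exactly 2(t+1) + 1 = 2t + 3: every nonempty codeword S satisfies |S| ≥ 2t + 3, and there exists a codeword of cardinality exactly 2t + 3. (Paperdef's Lemma 12 for the new codes with Goppa polynomial G₄(x) = A^t x^t + A^{t−1} x^{t−1} + 1, normalized to A = 1; note the design distance 2t+3 exceeds the generic bound 2·deg G₄ + 1 = 2t + 1.) -/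
open Finset

namespace Goppa18

open Polynomial

section lower

variable {K : Type*} [Field K] [DecidableEq K]

lemma pow_mul_eq (S : Finset K) (g : K → K) (t : ℕ)
    (h : ∀ j < t, ∑ α ∈ S, α ^ j * (g α)⁻¹ = 0) (k : ℕ) (hk : k ≤ t) :
    X ^ k * ∑ α ∈ S, C ((g α)⁻¹) * Lagrange.nodal (S.erase α) id =
      ∑ α ∈ S, C (α ^ k * (g α)⁻¹) * Lagrange.nodal (S.erase α) id := by
  rw [← sub_eq_zero, mul_sum, ← sum_sub_distrib]
  have h1 : ∀ α ∈ S, X ^ k * (C ((g α)⁻¹) * Lagrange.nodal (S.erase α) id) -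
      C (α ^ k * (g α)⁻¹) * Lagrange.nodal (S.erase α) id =
      (∑ i ∈ range k, X ^ i * C (α ^ (k - 1 - i) * (g α)⁻¹)) * Lagrange.nodal S id := by
    intro α hα
    rw [Lagrange.nodal_eq_mul_nodal_erase hα]
    have h2 := geom_sum₂_mul (X : K[X]) (C α) k
    have h3 : (∑ i ∈ range k, X ^ i * C (α ^ (k - 1 - i) * (g α)⁻¹)) =
        (∑ i ∈ range k, X ^ i * (C α) ^ (k - 1 - i)) * C ((g α)⁻¹) := by
      rw [sum_mul]
      refine sum_congr rfl fun i _ => ?_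
      simp [mul_assoc]
    rw [h3]
    simp only [id, C_mul, C_pow]
    linear_combination (-C ((g α)⁻¹) * Lagrange.nodal (S.erase α) id) * h2
  rw [sum_congr rfl h1, ← sum_mul, sum_comm]
  rw [sum_eq_zero, zero_mul]
  intro i hi
  rw [← mul_sum, ← map_sum, h _ (by have := mem_range.1 hi; omega)]
  simp

lemma G_dvd (S : Finset K) (t : ℕ)
    (h0 : ∀ α ∈ S, α ^ t + α ^ (t - 1) + 1 ≠ 0)
    (h : ∀ j < t, ∑ α ∈ S, α ^ j * (α ^ t + α ^ (t - 1) + 1)⁻¹ = 0) :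
    (X ^ t + X ^ (t - 1) + 1 : K[X]) ∣ derivative (Lagrange.nodal S id) := by
  have H := pow_mul_eq S (fun α => α ^ t + α ^ (t - 1) + 1) t h
  refine ⟨∑ α ∈ S, C ((α ^ t + α ^ (t - 1) + 1)⁻¹) * Lagrange.nodal (S.erase α) id, ?_⟩
  rw [add_mul, add_mul, H t le_rfl, H (t - 1) (by omega), one_mul, ← sum_add_distrib,
    ← sum_add_distrib, Lagrange.derivative_nodal]
  refine sum_congr rfl fun α hα => ?_
  rw [← add_mul, ← add_mul, ← C_add, ← C_add, ← add_mul, ← add_one_mul, mul_inv_cancel₀ (h0 α hα)]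
  simp

lemma deriv_sq [CharP K 2] [Finite K] (f : K[X]) : ∃ h : K[X], derivative f = h ^ 2 := by
  haveI : Fact (Nat.Prime 2) := ⟨Nat.prime_two⟩
  haveI : ExpChar K 2 := ExpChar.prime Nat.prime_two
  have h2 : derivative (derivative f) = 0 := by
    ext n
    rw [coeff_derivative, coeff_derivative, coeff_zero, mul_assoc]
    have : ((n + 1 : ℕ) + 1 : K) * (n + 1) = (((n + 1 + 1) * (n + 1) : ℕ) : K) := by push_cast; ring
    rw [this, (CharP.cast_eq_zero_iff K 2 _).2, mul_zero]
    have := Nat.even_mul_succ_self (n+1)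
    rw [mul_comm]; exact this.two_dvd
  refine ⟨(contract 2 (derivative f)).map ((frobeniusEquiv K 2).symm : K →+* K), ?_⟩
  conv_lhs => rw [← expand_contract 2 h2 two_ne_zero]
  exact polynomial_expand_eq K 2 _

lemma G_sqfree [CharP K 2] (t : ℕ) (ht : 2 ≤ t) (hte : Even t) :
    Squarefree (X ^ t + X ^ (t - 1) + 1 : K[X]) := by
  apply Separable.squarefree
  have hd : derivative (X ^ t + X ^ (t - 1) + 1 : K[X]) = X ^ (t - 2) := by
    have h1 : (t : K) = 0 := (CharP.cast_eq_zero_iff K 2 _).2 hte.two_dvd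
    have h2 : ((t - 1 : ℕ) : K) = 1 := by
      have : (t : K) = ((t - 1 : ℕ) : K) + 1 := by
        rw [← Nat.cast_succ]; congr 1; omega
      rw [h1] at this
      rw [← CharTwo.neg_eq (1 : K)]
      linear_combination -this
    simp [derivative_X_pow, h1, h2, Nat.sub_sub]
  rw [Separable, hd]
  apply IsCoprime.pow_right
  refine ⟨1, -(X ^ (t - 1) + X ^ (t - 2)), ?_⟩
  obtain ⟨s, rfl⟩ : ∃ s, t = s + 2 := ⟨t - 2, by omega⟩
  simp only [Nat.add_sub_cancel, show s + 2 - 1 = s + 1 by omega]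
  ring

lemma lagrange_sum (S : Finset K) (t n : ℕ) (q : K[X])
    (hS : S.Nonempty)
    (h0 : ∀ α ∈ S, α ^ t + α ^ (t - 1) + 1 ≠ 0)
    (ht : 1 ≤ t)
    (hq : derivative (Lagrange.nodal S id) = (X ^ t + X ^ (t - 1) + 1 : K[X]) ^ 2 * q)
    (hn : n < 2 * t) :
    ∑ α ∈ S, α ^ n * ((α ^ t + α ^ (t - 1) + 1) ^ 2)⁻¹ = 0 := by
  by_cases hq0 : q = 0
  · exfalso
    obtain ⟨a, ha⟩ := hS
    have := Lagrange.eval_nodal_derivative_eval_node_eq (v := (id : K → K)) ha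
    rw [hq, hq0, Lagrange.eval_nodal] at this
    simp only [mul_zero, eval_zero, id] at this
    obtain ⟨b, hb, hb'⟩ := prod_eq_zero_iff.1 this.symm
    exact (mem_erase.1 hb).1 (sub_eq_zero.1 hb').symm
  have hG : (X ^ t + X ^ (t - 1) + 1 : K[X]).Monic := by
    rw [add_assoc]
    apply monic_X_pow_add
    refine lt_of_le_of_lt (degree_add_le _ _) ?_
    rw [degree_X_pow, degree_one]
    apply max_lt <;> norm_cast <;> omega
  have hGd : (X ^ t + X ^ (t - 1) + 1 : K[X]).natDegree = t := by
    rw [add_assoc]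
    apply natDegree_eq_of_degree_eq_some
    rw [degree_add_eq_left_of_degree_lt, degree_X_pow]
    refine lt_of_le_of_lt (degree_add_le _ _) ?_
    rw [degree_X_pow, degree_one, degree_X_pow]
    apply max_lt <;> norm_cast <;> omega
  have hd : 2 * t + q.natDegree ≤ S.card - 1 := by
    have h1 := natDegree_derivative_le (Lagrange.nodal S (id : K → K))
    rw [hq, Lagrange.natDegree_nodal, Monic.natDegree_mul' (hG.pow 2) hq0, hG.natDegree_pow, hGd] at h1
    exact h1
  have hc := hS.card_pos
  have hnd : (X ^ n * q).natDegree = n + q.natDegree := by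
    rw [natDegree_mul (pow_ne_zero _ X_ne_zero) hq0, natDegree_X_pow]
  have hL := Lagrange.coeff_eq_sum (s := S) (v := (id : K → K)) (Function.injective_id.injOn)
    (P := X ^ n * q) (by
      refine lt_of_le_of_lt degree_le_natDegree ?_
      rw [hnd]; norm_cast; omega)
  rw [coeff_eq_zero_of_natDegree_lt (by rw [hnd]; omega)] at hL
  rw [hL]
  refine sum_congr rfl fun α hα => ?_
  have h1 := Lagrange.eval_nodal_derivative_eval_node_eq (v := (id : K → K)) hα
  rw [hq, Lagrange.eval_nodal] at h1
  simp only [id, eval_mul, eval_pow, eval_add, eval_X, eval_one] at h1 ⊢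
  rw [← h1]
  have hq1 : eval α q ≠ 0 := by
    intro h
    rw [h, mul_zero] at h1
    obtain ⟨b, hb, hb'⟩ := prod_eq_zero_iff.1 h1.symm
    exact (mem_erase.1 hb).1 (sub_eq_zero.1 hb').symm
  have := h0 α hα
  field_simp

lemma lower [CharP K 2] [Finite K] (l : ℕ) (hl : 2 ≤ l) (t : ℕ) (ht : t = 2 ^ l)
    (hF : ∀ x : K, (x ^ t) ^ t = x) (S : Finset K)
    (h0 : ∀ α ∈ S, α ^ t + α ^ (t - 1) + 1 ≠ 0)
    (h : ∀ j < t, ∑ α ∈ S, α ^ j * (α ^ t + α ^ (t - 1) + 1)⁻¹ = 0)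
    (hS : S.Nonempty) : 2 * t + 3 ≤ S.card := by
  haveI : Fact (Nat.Prime 2) := ⟨Nat.prime_two⟩
  have ht4 : 4 ≤ t := by rw [ht]; exact Nat.pow_le_pow_right (n := 2) (by norm_num) hl
  have hte : Even t := by rw [ht]; exact (even_two.pow_of_ne_zero (by omega))
  have hfr : ∀ f : K → K, (∑ α ∈ S, f α) ^ t = ∑ α ∈ S, f α ^ t := by
    intro f; rw [ht]; exact sum_pow_char_pow 2 l S f
  have hadd : ∀ x y : K, (x + y) ^ t = x ^ t + y ^ t := by
    intro x y; rw [ht]; exact add_pow_char_pow x y 2 l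
  -- G in terms of the norm
  have hG : ∀ α : K, α * (α ^ t + α ^ (t - 1) + 1) = α * α ^ t + α ^ t + α := by
    intro α
    obtain ⟨s, rfl⟩ : ∃ s, t = s + 1 := ⟨t - 1, by omega⟩
    simp only [Nat.add_sub_cancel]; ring
  have hN : ∀ α : K, (α * (α ^ t + α ^ (t - 1) + 1)) ^ t = α * (α ^ t + α ^ (t - 1) + 1) := by
    intro α
    rw [hG, hadd, hadd, mul_pow, hF]; ring
  have hz : (0 : K) ∉ S := by
    intro hz
    have e1 := h (t - 1) (by omega)
    have e2 := h 0 (by omega)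
    have e3 : ∑ α ∈ S, (α ^ (t - 1) * (α ^ t + α ^ (t - 1) + 1)⁻¹) ^ t = 0 := by
      rw [← hfr, e1, zero_pow (by omega)]
    rw [← add_sum_erase _ _ hz] at e2 e3
    have e4 : ∀ α ∈ S.erase 0, (α ^ (t - 1) * (α ^ t + α ^ (t - 1) + 1)⁻¹) ^ t =
        α ^ 0 * (α ^ t + α ^ (t - 1) + 1)⁻¹ := by
      intro α hα
      have hα0 := (mem_erase.1 hα).1
      have hg := h0 α (mem_erase.1 hα).2
      have : α ^ (t - 1) * (α ^ t + α ^ (t - 1) + 1)⁻¹ =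
          α ^ t * (α * (α ^ t + α ^ (t - 1) + 1))⁻¹ := by
        have : α ^ t = α ^ (t - 1) * α := by rw [← pow_succ]; congr 1; omega
        rw [mul_inv]
        rw [show α ^ t * (α⁻¹ * (α ^ t + α ^ (t - 1) + 1)⁻¹) =
          (α ^ t * α⁻¹) * (α ^ t + α ^ (t - 1) + 1)⁻¹ by ring]
        congr 1
        rw [this, mul_assoc, mul_inv_cancel₀ hα0, mul_one]
      rw [this, mul_pow, inv_pow, hN, hF, mul_inv, ← mul_assoc, mul_inv_cancel₀ hα0, pow_zero]
    rw [sum_congr rfl e4] at e3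
    rw [zero_pow (by omega : t - 1 ≠ 0), zero_pow (by omega : t ≠ 0), zero_mul,
      zero_pow (by omega : t ≠ 0), zero_add] at e3
    rw [e3, zero_pow (by omega : t - 1 ≠ 0), zero_pow (by omega : t ≠ 0)] at e2
    simp at e2
  obtain ⟨r, hr⟩ := deriv_sq (Lagrange.nodal S (id : K → K))
  have hGr : (X ^ t + X ^ (t - 1) + 1 : K[X]) ∣ r := by
    have := G_dvd S t h0 h
    rw [hr] at this
    exact ((G_sqfree t (by omega) hte).dvd_pow_iff_dvd two_ne_zero).1 this
  obtain ⟨q, rfl⟩ := hGr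
  rw [mul_pow] at hr
  have hsum := fun n hn => lagrange_sum S t n (q ^ 2) hS h0 (by omega) hr hn
  -- sum of inverses
  have hinv : ∑ α ∈ S, α⁻¹ = 0 := by
    have e1 : ∀ α ∈ S, α⁻¹ = α ^ (2 * t - 1) * ((α ^ t + α ^ (t - 1) + 1) ^ 2)⁻¹ +
        α ^ (2 * t - 3) * ((α ^ t + α ^ (t - 1) + 1) ^ 2)⁻¹ +
        (α ^ (t - 2) * ((α ^ t + α ^ (t - 1) + 1) ^ 2)⁻¹) ^ t := by
      intro α hα
      have hα0 : α ≠ 0 := fun h => hz (h ▸ hα)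
      have hg := h0 α hα
      have a1 : (α ^ (t - 2) * ((α ^ t + α ^ (t - 1) + 1) ^ 2)⁻¹) =
          α ^ t * ((α * (α ^ t + α ^ (t - 1) + 1)) ^ 2)⁻¹ := by
        have : α ^ t = α ^ (t - 2) * α ^ 2 := by rw [← pow_add]; congr 1; omega
        rw [mul_pow, mul_inv, ← mul_assoc]
        congr 1
        rw [this, mul_assoc, mul_inv_cancel₀ (pow_ne_zero _ hα0), mul_one]
      rw [a1, mul_pow, hF, inv_pow, ← pow_mul, mul_comm 2 t, pow_mul, hN]
      have a2 : α ^ (t * 2 - 1) * α = α ^ t * α ^ t := by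
        rw [← pow_succ, ← pow_add]; congr 1; omega
      have a3 : α ^ (t * 2 - 3) * α = α ^ (t - 1) * α ^ (t - 1) := by
        rw [← pow_succ, ← pow_add]; congr 1; omega
      have c2 : (2 : K) = 0 := CharTwo.two_eq_zero
      field_simp
      linear_combination (-1 : K) * a2 - a3 + (α ^ t * α ^ (t - 1) + α ^ t + α ^ (t - 1)) * c2
    rw [sum_congr rfl e1, sum_add_distrib, sum_add_distrib, hsum _ (by omega), hsum _ (by omega),
      ← hfr, hsum _ (by omega), zero_pow (by omega)]
    simp
  have hd0 : eval 0 (derivative (Lagrange.nodal S (id : K → K))) = 0 := by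
    rw [Lagrange.derivative_nodal, eval_finsetSum]
    have : ∀ α ∈ S, eval 0 (Lagrange.nodal (S.erase α) (id : K → K)) =
        -(eval 0 (Lagrange.nodal S (id : K → K)) * α⁻¹) := by
      intro α hα
      have hα0 : α ≠ 0 := fun h => hz (h ▸ hα)
      rw [Lagrange.nodal_eq_mul_nodal_erase hα]
      simp only [eval_mul, eval_sub, eval_X, eval_C, id]
      field_simp
      ring
    rw [sum_congr rfl this, sum_neg_distrib, ← mul_sum, hinv]
    simp
  have hq0 : eval 0 q = 0 := by
    rw [hr] at hd0
    simpa [zero_pow (by omega : t - 1 ≠ 0), zero_pow (by omega : t ≠ 0)] using hd0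
  obtain ⟨p, rfl⟩ : X ∣ q := by
    rw [X_dvd_iff, coeff_zero_eq_eval_zero]; exact hq0
  have hp0 : p ≠ 0 := by
    rintro rfl
    obtain ⟨a, ha⟩ := hS
    have := Lagrange.eval_nodal_derivative_eval_node_eq (v := (id : K → K)) ha
    rw [hr, Lagrange.eval_nodal] at this
    simp only [mul_zero, eval_zero, id, ne_eq, OfNat.ofNat_ne_zero, not_false_eq_true, zero_pow] at this
    obtain ⟨b, hb, hb'⟩ := prod_eq_zero_iff.1 this.symm
    exact (mem_erase.1 hb).1 (sub_eq_zero.1 hb').symm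
  have hGd : (X ^ t + X ^ (t - 1) + 1 : K[X]).natDegree = t := by
    rw [add_assoc]
    apply natDegree_eq_of_degree_eq_some
    rw [degree_add_eq_left_of_degree_lt, degree_X_pow]
    refine lt_of_le_of_lt (degree_add_le _ _) ?_
    rw [degree_X_pow, degree_one, degree_X_pow]
    apply max_lt <;> norm_cast <;> omega
  have hG0 : (X ^ t + X ^ (t - 1) + 1 : K[X]) ≠ 0 := by
    intro h; rw [h, natDegree_zero] at hGd; omega
  have h1 := natDegree_derivative_le (Lagrange.nodal S (id : K → K))
  rw [hr, Lagrange.natDegree_nodal, natDegree_mul (pow_ne_zero _ hG0)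
    (pow_ne_zero _ (mul_ne_zero X_ne_zero hp0)), natDegree_pow, natDegree_pow, hGd,
    natDegree_mul X_ne_zero hp0, natDegree_X] at h1
  omega

end lower

section upper

variable {K : Type*} [Field K] [DecidableEq K]

lemma circle_sum [CharP K 2] (t : ℕ) (hte : Even t) (ht : 2 ≤ t) (u y : K)
    (hu : IsPrimitiveRoot u (t + 1)) (n : ℕ) (hn : n ≤ t) :
    ∑ i ∈ range (t + 1), (y * u ^ i + 1) ^ n = 1 := by
  have ht0 : (t : K) = 0 := (CharP.cast_eq_zero_iff K 2 _).2 hte.two_dvd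
  simp only [add_pow, one_pow, mul_one]
  rw [sum_comm, sum_range_succ', sum_eq_zero]
  · simp [ht0]
  intro k hk
  have hk := mem_range.1 hk
  have h1 : u ^ (k + 1) ≠ 1 := hu.pow_ne_one_of_pos_of_lt (by omega) (by omega)
  have h2 : ∑ i ∈ range (t + 1), (u ^ (k + 1)) ^ i = 0 := by
    have := mul_geom_sum (u ^ (k + 1)) (t + 1)
    rw [← pow_mul, mul_comm, mul_comm (k + 1), pow_mul, hu.pow_eq_one, one_pow, sub_self] at this
    exact (mul_eq_zero.1 this).resolve_right (sub_ne_zero.2 h1)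
  rw [← sum_mul]
  have : ∀ i ∈ range (t + 1), (y * u ^ i) ^ (k + 1) = y ^ (k + 1) * (u ^ (k + 1)) ^ i := by
    intro i _; rw [mul_pow, ← pow_mul, ← pow_mul, mul_comm i]
  rw [sum_congr rfl this, ← mul_sum, h2]; simp

lemma upper [CharP K 2] (l : ℕ) (hl : 2 ≤ l) (t : ℕ) (ht : t = 2 ^ l)
    (g : K) (hg : IsPrimitiveRoot g (t * t - 1)) :
    ∃ S : Finset K,
        (∀ α ∈ S, α ^ t + α ^ (t - 1) + 1 ≠ 0) ∧
        (∀ j < t, ∑ α ∈ S, α ^ j * (α ^ t + α ^ (t - 1) + 1)⁻¹ = 0) ∧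
        S.card = 2 * t + 3 := by
  haveI : Fact (Nat.Prime 2) := ⟨Nat.prime_two⟩
  have ht4 : 4 ≤ t := by rw [ht]; exact Nat.pow_le_pow_right (n := 2) (by norm_num) hl
  have hte : Even t := by rw [ht]; exact (even_two.pow_of_ne_zero (by omega))
  have c2 : (2 : K) = 0 := CharTwo.two_eq_zero
  have hadd : ∀ x y : K, (x + y) ^ t = x ^ t + y ^ t := by
    intro x y; rw [ht]; exact add_pow_char_pow x y 2 l
  have hG : ∀ α : K, α * (α ^ t + α ^ (t - 1) + 1) = (α + 1) ^ (t + 1) + 1 := by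
    intro α
    rw [pow_succ, hadd, one_pow]
    obtain ⟨s, rfl⟩ : ∃ s, t = s + 1 := ⟨t - 1, by omega⟩
    simp only [Nat.add_sub_cancel]
    linear_combination (-1 : K) * c2
  have hfac : t * t - 1 = (t - 1) * (t + 1) := by
    obtain ⟨s, rfl⟩ : ∃ s, t = s + 1 := ⟨t - 1, by omega⟩
    simp only [Nat.add_sub_cancel]
    rw [Nat.sub_eq_iff_eq_add (by nlinarith)]; ring
  have hpos : 0 < t * t - 1 := by rw [hfac]; exact Nat.mul_pos (by omega) (by omega)
  set u := g ^ (t - 1) with hu'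
  have hu : IsPrimitiveRoot u (t + 1) := hg.pow hpos hfac
  have hg0 : g ≠ 0 := hg.ne_zero (by omega)
  have hu0 : u ≠ 0 := pow_ne_zero _ hg0
  set a := g ^ (t + 1) with ha
  have ha0 : a ≠ 0 := pow_ne_zero _ hg0
  have ha1 : a ≠ 1 := hg.pow_ne_one_of_pos_of_lt (by omega) (by rw [hfac]; nlinarith [Nat.sub_add_cancel (show 1 ≤ t by omega)])
  have ha2 : a ≠ a⁻¹ := by
    intro h
    have h2 : a * a = 1 := by nth_rewrite 2 [h]; exact mul_inv_cancel₀ ha0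
    apply ha1
    have : (a - 1) ^ 2 = 0 := by linear_combination h2 + (1 - a) * c2
    exact sub_eq_zero.1 (pow_eq_zero_iff two_ne_zero |>.1 this)
  have ha3 : a⁻¹ ≠ 1 := by simpa using ha1
  -- circles
  let A (y : K) : Finset K := (range (t + 1)).image (fun i => y * u ^ i + 1)
  have hinj : ∀ y : K, y ≠ 0 → Set.InjOn (fun i => y * u ^ i + 1) (range (t + 1) : Set ℕ) := by
    intro y hy i hi j hj hij
    have := mul_left_cancel₀ hy (add_right_cancel hij)
    exact hu.pow_inj (by simpa using hi) (by simpa using hj) this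
  have hcard : ∀ y : K, y ≠ 0 → (A y).card = t + 1 := by
    intro y hy
    rw [card_image_of_injOn (hinj y hy), card_range]
  have hnorm : ∀ y : K, ∀ x ∈ A y, (x + 1) ^ (t + 1) = y ^ (t + 1) := by
    intro y x hx
    obtain ⟨i, _, rfl⟩ := mem_image.1 hx
    have : y * u ^ i + 1 + 1 = y * u ^ i := by linear_combination c2
    rw [this, mul_pow, ← pow_mul, mul_comm i, pow_mul, hu.pow_eq_one, one_pow, mul_one]
  have hval : ∀ x b : K, b ≠ 1 → (x + 1) ^ (t + 1) = b → x ≠ 0 ∧ x ^ t + x ^ (t - 1) + 1 ≠ 0 ∧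
      (x ^ t + x ^ (t - 1) + 1)⁻¹ = x * (b + 1)⁻¹ := by
    intro x b hb hx
    have h1 := hG x
    rw [hx] at h1
    have hb1 : b + 1 ≠ 0 := by
      intro h; apply hb; linear_combination h - c2
    rw [← h1] at hb1
    have hx0 := left_ne_zero_of_mul hb1
    have hx1 := right_ne_zero_of_mul hb1
    refine ⟨hx0, hx1, ?_⟩
    rw [← h1, mul_inv, ← mul_assoc, mul_inv_cancel₀ hx0, one_mul]
  have hsumA : ∀ y : K, y ≠ 0 → y ^ (t + 1) ≠ 1 → ∀ j < t,
      ∑ α ∈ A y, α ^ j * (α ^ t + α ^ (t - 1) + 1)⁻¹ = (y ^ (t + 1) + 1)⁻¹ := by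
    intro y hy hy1 j hj
    have : ∀ α ∈ A y, α ^ j * (α ^ t + α ^ (t - 1) + 1)⁻¹ = α ^ (j + 1) * (y ^ (t + 1) + 1)⁻¹ := by
      intro α hα
      rw [(hval α _ hy1 (hnorm y α hα)).2.2]; ring
    rw [sum_congr rfl this, ← sum_mul, sum_image (hinj y hy),
      circle_sum t hte (by omega) u y hu (j + 1) (by omega), one_mul]
  have hgi : g⁻¹ ^ (t + 1) = a⁻¹ := by rw [inv_pow]
  have hdisj : Disjoint (A g) (A g⁻¹) := by
    rw [disjoint_left]
    intro x hx hx'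
    have h1 := hnorm _ _ hx
    rw [hnorm _ _ hx', hgi] at h1
    exact ha2 h1.symm
  have h11 : (1 + 1 : K) = 0 := by linear_combination c2
  have h1n : (1 : K) ∉ A g ∪ A g⁻¹ := by
    intro h
    rcases mem_union.1 h with h | h
    · have := hnorm _ _ h
      rw [h11, zero_pow (by omega)] at this
      exact ha0 this.symm
    · have := hnorm _ _ h
      rw [h11, zero_pow (by omega), hgi] at this
      exact inv_ne_zero ha0 this.symm
  refine ⟨insert 1 (A g ∪ A g⁻¹), ?_, ?_, ?_⟩
  · intro α hα
    rcases mem_insert.1 hα with rfl | hα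
    · simp [h11]
    rcases mem_union.1 hα with h | h
    · exact (hval α a ha1 (hnorm _ _ h)).2.1
    · exact (hval α a⁻¹ ha3 ((hnorm _ _ h).trans hgi)).2.1
  · intro j hj
    rw [sum_insert h1n, sum_union hdisj, hsumA g hg0 ha1 j hj,
      hsumA g⁻¹ (inv_ne_zero hg0) (by rw [hgi]; exact ha3) j hj, hgi]
    have hb1 : a + 1 ≠ 0 := by
      intro h; apply ha1; linear_combination h - c2
    have e : a⁻¹ + 1 = (a + 1) * a⁻¹ := by rw [add_mul, mul_inv_cancel₀ ha0]; ring
    rw [e, mul_inv, inv_inv, ← ha]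
    have e2 : (a + 1)⁻¹ + (a + 1)⁻¹ * a = 1 := by
      rw [← mul_one_add, add_comm 1 a, inv_mul_cancel₀ hb1]
    rw [e2]
    simp [h11]
  · rw [card_insert_of_notMem h1n, card_union_of_disjoint hdisj, hcard g hg0,
      hcard _ (inv_ne_zero hg0)]
    omega

end upper

end Goppa18

/-- Paper's Lemma 12 (normalized to `A = 1`): for `l ≥ 2`, `F = GF(2^(2l))`, `t = 2^l`,
`L₄ = {α : α^t + α^(t-1) + 1 ≠ 0}`, the minimum distance of the binary Goppa code
`Γ(L₄, X^t + X^(t-1) + 1)` equals exactly `2(t+1) + 1 = 2t + 3`. -/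
theorem stmt_18 (l : ℕ) (hl : 2 ≤ l) (t : ℕ) (ht : t = 2 ^ l) :
    (∀ S : Finset (GaloisField 2 (2 * l)),
        (∀ α ∈ S, α ^ t + α ^ (t - 1) + 1 ≠ 0) →
        (∀ j < t, ∑ α ∈ S, α ^ j * (α ^ t + α ^ (t - 1) + 1)⁻¹ = 0) →
        S.Nonempty → 2 * t + 3 ≤ S.card) ∧
    (∃ S : Finset (GaloisField 2 (2 * l)),
        (∀ α ∈ S, α ^ t + α ^ (t - 1) + 1 ≠ 0) ∧
        (∀ j < t, ∑ α ∈ S, α ^ j * (α ^ t + α ^ (t - 1) + 1)⁻¹ = 0) ∧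
        S.card = 2 * t + 3) := by
  classical
  have hc : Nat.card (GaloisField 2 (2 * l)) = t * t := by
    rw [GaloisField.card 2 _ (by omega), ht, two_mul, pow_add]
  haveI : Fintype (GaloisField 2 (2 * l)) := Fintype.ofFinite _
  have hc' : Fintype.card (GaloisField 2 (2 * l)) = t * t := by
    rw [← Nat.card_eq_fintype_card, hc]
  constructor
  · intro S h0 h hS
    refine Goppa18.lower l hl t ht ?_ S h0 h hS
    intro x
    rw [← pow_mul, ← hc']
    exact FiniteField.pow_card x
  · obtain ⟨g, hg⟩ := IsCyclic.exists_generator (α := (GaloisField 2 (2 * l))ˣ)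
    refine Goppa18.upper l hl t ht (g : GaloisField 2 (2 * l)) ?_
    rw [IsPrimitiveRoot.coe_units_iff]
    have := orderOf_eq_card_of_forall_mem_zpowers hg
    rw [Nat.card_eq_fintype_card, Fintype.card_units, hc'] at this
    rw [← this]
    exact IsPrimitiveRoot.orderOf g
end

section
/- Let l ≥ 1, F = GF(2^{2l}), t = 2^l, and L₇ = {α ∈ F : α^{t+1} ≠ 1}. Let β ∈ F with β^{t+1} = 1. Then multiplication by β preserves the binary Goppa code Γ(L₇, X^{t+1} + 1): a finite subset S ⊆ L₇ is a codeword of Γ(L₇, X^{t+1}+1) if and only if {β·α : α ∈ S} (which is again contained in L₇) is a codeword of Γ(L₇, X^{t+1}+1). (Invariance claim from Table 2 of the paper: the Goppa polynomial x^{t+1}+1 is invariant under x ↦ βx for β = (α^{2^l−1})^i, making the code quasi-cyclic of index 2^l+1.) -/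
open Finset
open scoped Classical

/-- Quasi-cyclicity claim from Table 2 of the paper: over `F = GF(2^(2l))`, `t = 2^l`,
`L₇ = {α : α^(t+1) ≠ 1}`, if `β^(t+1) = 1` then multiplication by `β` preserves the
binary Goppa code `Γ(L₇, X^(t+1) + 1)`: `S ⊆ L₇` is a codeword iff `{β α : α ∈ S}`
(again contained in `L₇`) is a codeword. -/
theorem stmt_19 (l : ℕ) (hl : 1 ≤ l) (t : ℕ) (ht : t = 2 ^ l)
    (β : GaloisField 2 (2 * l)) (hβ : β ^ (t + 1) = 1)
    (S : Finset (GaloisField 2 (2 * l)))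
    (hS : ∀ α ∈ S, α ^ (t + 1) ≠ 1) :
    (∀ γ ∈ S.image (β * ·), γ ^ (t + 1) ≠ 1) ∧
      ((∀ j < t + 1, ∑ α ∈ S, α ^ j * (α ^ (t + 1) + 1)⁻¹ = 0) ↔
        (∀ j < t + 1, ∑ γ ∈ S.image (β * ·), γ ^ j * (γ ^ (t + 1) + 1)⁻¹ = 0)) := by
  have hb : β ≠ 0 := by
    rintro rfl
    simp at hβ
  have key : ∀ j, ∑ γ ∈ S.image (β * ·), γ ^ j * (γ ^ (t + 1) + 1)⁻¹
      = β ^ j * ∑ α ∈ S, α ^ j * (α ^ (t + 1) + 1)⁻¹ := by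
    intro j
    rw [Finset.sum_image (fun a _ b _ h => mul_left_cancel₀ hb h), Finset.mul_sum]
    refine Finset.sum_congr rfl fun a _ => ?_
    rw [mul_pow, mul_pow β a (t + 1), hβ, one_mul, mul_assoc]
  refine ⟨?_, ?_⟩
  · intro γ hγ
    obtain ⟨a, ha, rfl⟩ := Finset.mem_image.mp hγ
    simp only [mul_pow, hβ, one_mul]
    exact hS a ha
  · refine forall_congr' fun j => imp_congr_right fun _ => ?_
    rw [key j, mul_eq_zero]
    exact ⟨Or.inr, fun h => h.resolve_left (pow_ne_zero j hb)⟩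
end
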